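/- Let z₀ ≥ 1 and 0 < ε < 1/2. There exist constants 0 < c ≤ C (depending only on z₀ and ε) such that for all x, y, z, t satisfying x ≥ y ≥ x^{1/2+ε} ≥ 2, 1 ≤ t ≤ x, and 1 ≤ z ≤ z₀, one has c · x · log(2t)/log x ≤ A(x,y,z,t) ≤ C · x · log(2t)/log x. -/

import Mathlib

/-- `Pmax n` is the largest prime factor of `n`, with the convention `Pmax 1 = 1`. -/
def Pmax (n : ℕ) : ℕ := if n ≤ 1 then 1 else n.primeFactors.sup id

/-- The Schinzel–Szekeres function: if `n = p₁ p₂ ⋯ p_Ω` with `p₁ ≥ p₂ ≥ ⋯ ≥ p_Ω` prime,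
`SS n = max_{1 ≤ k ≤ Ω} p₁ ⋯ p_{k-1} p_k²`, and `SS 1 = 1`.
(`Nat.primeFactorsList n` is the *increasing* list of prime factors with multiplicity;
the value produced for the index `j` is the one for `k = Ω - j`.) -/
def SS (n : ℕ) : ℕ :=
  ((List.range n.primeFactorsList.length).map
    (fun j => (n.primeFactorsList.drop j).headI * (n.primeFactorsList.drop j).prod)).foldr max 1

/-- A chain in the divisor graph: a finite sequence of pairwise distinct positive
integers in which any two consecutive terms are adjacent in the divisor graph
(the smaller divides the larger). -/
def IsDivChain (l : List ℕ) : Prop :=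
  l.Nodup ∧ (∀ n ∈ l, 0 < n) ∧ l.Chain' (fun a b => a ∣ b ∨ b ∣ a)

/-- `Axyzt x y z t = #{n ≥ 1 : n ≤ x, P(n) ≤ y, P⁻(n) > z and S(n) ≤ x*t}`
(the condition `P⁻(n) > z` is expressed as: every prime factor of `n` exceeds `z`,
which is vacuously true for `n = 1`, matching `P⁻(1) = +∞`). -/
noncomputable def Axyzt (x y z t : ℝ) : ℕ :=
  {n : ℕ | 1 ≤ n ∧ (n : ℝ) ≤ x ∧ (Pmax n : ℝ) ≤ y ∧
    (∀ p : ℕ, p.Prime → p ∣ n → z < (p : ℝ)) ∧ (SS n : ℝ) ≤ x * t}.ncard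

/-!
The condition `S n ≤ x * t` says that every prime factor of `n` is at most `x * t / n` times the
product of the smaller prime factors: `n` is *dense* with ratio `x * t / n`.

Taking the prime factors of an integer in increasing order for as long as each is at most `t` times
the product of those before it, every integer free of primes `≤ z` is uniquely `m * k` with `m`
dense and all primes of `k` larger than `t * m`. Hence, for every exponent `s > 0`, the weights
`m ^ (-s) * ∏ (1 - p ^ (-s))`, over the primes `z < p ≤ t * m`, sum to `1` over the dense `m`.
Comparing this identity at `s = 1` with the one at nearby exponents (Rankin's trick) shows how
much of the mass sits at `log m` of a given size. By Mertens' theorem the weight at `s = 1` is about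
`1 / (m * log (t * m))`, so this bounds the reciprocal sums of dense integers from both sides. The
upper bound for the count follows on splitting off the largest prime factor; for the lower bound,
multiply the dense integers between `x ^ (1 / 2) / 2` and `x ^ (3 / 4)` by primes `p > x ^ (1 / 8)`:
each product arises at most eight times.
-/

namespace SchinzelSzekeres

open Filter Finset Real Topology

variable {z t N y m n p : ℕ} {s δ : ℝ}

/-! ### Mertens' estimates -/

lemma log_factorial_eq_sum_primesLE (n : ℕ) :
    log n.factorial = ∑ p ∈ Nat.primesLE n, (n.factorial.factorization p : ℝ) * log p := by
  rw [log_nat_eq_sum_factorization, Finsupp.sum]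
  refine sum_subset (fun p hp ↦ ?_) fun p _ hp ↦ ?_
  · rw [Nat.support_factorization, Nat.mem_primeFactors] at hp
    exact Nat.mem_primesLE.2 ⟨(hp.1.dvd_factorial).1 hp.2.1, hp.1⟩
  · rw [Finsupp.notMem_support_iff.1 hp, Nat.cast_zero, zero_mul]

lemma div_le_factorization_factorial {p : ℕ} (hp : p.Prime) (n : ℕ) :
    n / p ≤ n.factorial.factorization p := by
  rw [Nat.factorization_factorial hp (Nat.lt_succ_self _)]
  rcases le_or_gt p n with h | h
  · have h1 : 1 ∈ Ico 1 (Nat.log p n).succ :=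
      mem_Ico.2 ⟨le_rfl, Nat.lt_succ_of_le (Nat.log_pos hp.one_lt h)⟩
    simpa only [pow_one] using single_le_sum (fun i _ ↦ Nat.zero_le (n / p ^ i)) h1
  · rw [Nat.div_eq_of_lt h]
    exact Nat.zero_le _

lemma factorization_factorial_le {p : ℕ} (hp : p.Prime) (n : ℕ) :
    (n.factorial.factorization p : ℝ) ≤ n / ((p : ℝ) - 1) := by
  have := Fact.mk hp
  have hlegendre := sub_one_mul_padicValNat_factorial (p := p) n
  rw [← Nat.factorization_def _ hp] at hlegendre
  have hle : (p - 1) * n.factorial.factorization p ≤ n := by omega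
  rw [le_div_iff₀ (sub_pos.2 (by exact_mod_cast hp.one_lt)), mul_comm, ← Nat.cast_pred hp.pos]
  exact_mod_cast hle

lemma sum_primesLE_log_div_le (n : ℕ) :
    ∑ p ∈ Nat.primesLE n, log p / p ≤ log n + log 4 := by
  rcases n.eq_zero_or_pos with rfl | hn
  · simp [log_nonneg]
  have hn' : (0 : ℝ) < n := by exact_mod_cast hn
  have hfactorial : log n.factorial ≤ n * log n := by
    rw [← log_pow]
    exact log_le_log (by exact_mod_cast n.factorial_pos) (by exact_mod_cast n.factorial_le_pow)
  have hterm : ∑ p ∈ Nat.primesLE n, ((n : ℝ) / p - 1) * log p ≤ log n.factorial := by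
    rw [log_factorial_eq_sum_primesLE]
    refine sum_le_sum fun p hp ↦ mul_le_mul_of_nonneg_right ?_ (log_natCast_nonneg p)
    have hdiv : ((n / p : ℕ) : ℝ) ≤ n.factorial.factorization p := by
      exact_mod_cast div_le_factorization_factorial (Nat.mem_primesLE.1 hp).2 n
    have hfloor := Nat.lt_floor_add_one ((n : ℝ) / p)
    rw [Nat.floor_div_eq_div] at hfloor
    linarith
  have htheta : ∑ p ∈ Nat.primesLE n, log p ≤ log 4 * n := by
    simpa only [Chebyshev.theta_eq_sum_primesLE_log, Nat.floor_natCast] using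
      Chebyshev.theta_le_log4_mul_x hn'.le
  have hsplit : ∑ p ∈ Nat.primesLE n, ((n : ℝ) / p - 1) * log p =
      n * ∑ p ∈ Nat.primesLE n, log p / p - ∑ p ∈ Nat.primesLE n, log p := by
    rw [mul_sum, ← sum_sub_distrib]
    exact sum_congr rfl fun p _ ↦ by ring
  refine le_of_mul_le_mul_left ?_ hn'
  linarith

lemma mul_log_sub_one_le_log_factorial (n : ℕ) : n * (log n - 1) ≤ log n.factorial := by
  rcases n.eq_zero_or_pos with rfl | hn
  · simp
  have hn' : (0 : ℝ) < n := by exact_mod_cast hn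
  have hf : (0 : ℝ) < n.factorial := by exact_mod_cast n.factorial_pos
  have h : log ((n : ℝ) ^ n / n.factorial) ≤ n :=
    (log_le_iff_le_exp (by positivity)).2 (pow_div_factorial_le_exp _ hn'.le n)
  rw [log_div (by positivity) hf.ne', log_pow] at h
  linarith

lemma log_sub_one_le_sum_primesLE (n : ℕ) :
    log n - 1 ≤ ∑ p ∈ Nat.primesLE n, log p / ((p : ℝ) - 1) := by
  rcases n.eq_zero_or_pos with rfl | hn
  · simp
  refine le_of_mul_le_mul_left ((mul_log_sub_one_le_log_factorial n).trans ?_)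
    (by exact_mod_cast hn : (0 : ℝ) < n)
  rw [log_factorial_eq_sum_primesLE, mul_sum]
  refine sum_le_sum fun p hp ↦ ?_
  calc (n.factorial.factorization p : ℝ) * log p ≤ n / ((p : ℝ) - 1) * log p := by
        gcongr
        exact factorization_factorial_le (Nat.mem_primesLE.1 hp).2 n
    _ = n * (log p / ((p : ℝ) - 1)) := by ring

lemma log_div_sub_sqrt_sub_log_div_le {x : ℝ} (hx : 2 ≤ x) :
    log x / (x - √x) - log x / x ≤ 16 * (1 / x ^ ((5 : ℝ) / 4)) := by
  have hx0 : 0 < x := by linarith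
  have hsq : √x * √x = x := mul_self_sqrt hx0.le
  have hsqrt : 4 / 3 ≤ √x := le_sqrt_of_sq_le (by norm_num; linarith)
  have hlog : log x ≤ 4 * x ^ ((1 : ℝ) / 4) := by
    have := log_le_rpow_div hx0.le (ε := 1 / 4) (by norm_num)
    linarith
  have hpow : x ^ ((5 : ℝ) / 4) * x ^ ((1 : ℝ) / 4) = x * √x := by
    rw [sqrt_eq_rpow, ← rpow_add hx0, ← rpow_one_add' hx0.le (by norm_num)]
    norm_num
  have hdiff : log x / (x - √x) - log x / x = log x / (x * (√x - 1)) := by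
    have hpos : 0 < x - √x := by nlinarith
    rw [div_sub_div _ _ hpos.ne' hx0.ne', div_eq_div_iff (by positivity) (by nlinarith)]
    linear_combination (x * log x) * hsq
  rw [hdiff, div_le_iff₀ (by nlinarith), mul_one_div, div_mul_eq_mul_div,
    le_div_iff₀ (by positivity)]
  calc log x * x ^ ((5 : ℝ) / 4) ≤ 4 * x ^ ((1 : ℝ) / 4) * x ^ ((5 : ℝ) / 4) := by gcongr
    _ = 4 * (x * √x) := by rw [← hpow]; ring
    _ ≤ 16 * (x * (√x - 1)) := by nlinarith

lemma exists_sum_log_div_sub_sqrt_sub_le : ∃ C : ℝ, 0 ≤ C ∧ ∀ P : Finset ℕ, (∀ p ∈ P, 2 ≤ p) →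
    ∑ p ∈ P, (log p / ((p : ℝ) - √p) - log p / p) ≤ C := by
  have hsummable : Summable fun n : ℕ ↦ 16 * (1 / (n : ℝ) ^ ((5 : ℝ) / 4)) :=
    (summable_one_div_nat_rpow.2 (by norm_num)).mul_left _
  refine ⟨_, tsum_nonneg fun n ↦ by positivity, fun P hP ↦ (sum_le_sum fun p hp ↦ ?_).trans
    (hsummable.sum_le_tsum P fun n _ ↦ by positivity)⟩
  exact log_div_sub_sqrt_sub_log_div_le (by exact_mod_cast hP p hp)

lemma exists_sum_log_div_sub_sqrt_le : ∃ C : ℝ, 0 ≤ C ∧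
    ∀ (n : ℕ) (P : Finset ℕ), P ⊆ Nat.primesLE n → ∑ p ∈ P, log p / ((p : ℝ) - √p) ≤ log n + C := by
  obtain ⟨C, hC, h⟩ := exists_sum_log_div_sub_sqrt_sub_le
  refine ⟨C + log 4, by positivity, fun n P hP ↦ ?_⟩
  have herror := h P fun p hp ↦ (Nat.mem_primesLE.1 (hP hp)).2.two_le
  have hmain : ∑ p ∈ P, log p / p ≤ log n + log 4 :=
    (sum_le_sum_of_subset_of_nonneg hP fun p _ _ ↦
      div_nonneg (log_natCast_nonneg p) p.cast_nonneg).trans (sum_primesLE_log_div_le n)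
  rw [sum_sub_distrib] at herror
  linarith

lemma exists_le_sum_primesLE_log_div : ∃ C : ℝ, 0 ≤ C ∧
    ∀ n : ℕ, log n - C ≤ ∑ p ∈ Nat.primesLE n, log p / p := by
  obtain ⟨C, hC, h⟩ := exists_sum_log_div_sub_sqrt_sub_le
  refine ⟨1 + C, by positivity, fun n ↦ ?_⟩
  have herror := h (Nat.primesLE n) fun p hp ↦ (Nat.mem_primesLE.1 hp).2.two_le
  have hweight : ∑ p ∈ Nat.primesLE n, log p / ((p : ℝ) - 1) ≤
      ∑ p ∈ Nat.primesLE n, log p / ((p : ℝ) - √p) := by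
    refine sum_le_sum fun p hp ↦ ?_
    have hp2 : (2 : ℝ) ≤ p := by exact_mod_cast (Nat.mem_primesLE.1 hp).2.two_le
    have hsqrt : 1 < √(p : ℝ) := lt_sqrt_of_sq_lt (by linarith)
    have hsq : √(p : ℝ) * √p = p := mul_self_sqrt (by linarith)
    have := log_natCast_nonneg p
    gcongr
    nlinarith
  have hlower := log_sub_one_le_sum_primesLE n
  rw [sum_sub_distrib] at herror
  linarith

lemma exists_le_sum_primesLE_filter_log_div (z : ℕ) : ∃ C : ℝ, 0 ≤ C ∧
    ∀ n : ℕ, log n - C ≤ ∑ p ∈ Nat.primesLE n with z < p, log p / p := by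
  obtain ⟨C, hC, h⟩ := exists_le_sum_primesLE_log_div
  have hnonneg (p : ℕ) : 0 ≤ log p / p := div_nonneg (log_natCast_nonneg p) p.cast_nonneg
  refine ⟨C + ∑ p ∈ Nat.primesLE z, log p / p, add_nonneg hC (sum_nonneg fun p _ ↦ hnonneg p),
    fun n ↦ ?_⟩
  have hsplit := sum_filter_add_sum_filter_not (Nat.primesLE n) (z < ·) fun p ↦ log p / (p : ℝ)
  have hsmall : ∑ p ∈ Nat.primesLE n with ¬ z < p, log p / (p : ℝ) ≤
      ∑ p ∈ Nat.primesLE z, log p / (p : ℝ) := by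
    refine sum_le_sum_of_subset_of_nonneg (fun p hp ↦ ?_) fun p _ _ ↦ hnonneg p
    rw [mem_filter, not_lt, Nat.mem_primesLE] at hp
    exact Nat.mem_primesLE.2 ⟨hp.2, hp.1.2⟩
  have hn := h n
  linarith

/-! ### Dense integers -/

/-- `smoothPart n p` is the product, with multiplicity, of the prime factors of `n` below `p`. -/
def smoothPart (n p : ℕ) : ℕ := (n.primeFactorsList.filter (· < p)).prod

lemma smoothPart_mul {a b : ℕ} (ha : a ≠ 0) (hb : b ≠ 0) (p : ℕ) :
    smoothPart (a * b) p = smoothPart a p * smoothPart b p := by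
  unfold smoothPart
  rw [((Nat.perm_primeFactorsList_mul ha hb).filter _).prod_eq, List.filter_append,
    List.prod_append]

lemma smoothPart_prime {p : ℕ} (hp : p.Prime) (q : ℕ) :
    smoothPart p q = if p < q then p else 1 := by
  rw [smoothPart, Nat.primeFactorsList_prime hp]
  split_ifs with h <;> simp [h]

lemma smoothPart_dvd {n : ℕ} (hn : n ≠ 0) (p : ℕ) : smoothPart n p ∣ n := by
  conv_rhs => rw [← Nat.prod_primeFactorsList hn]
  exact List.filter_sublist.prod_dvd_prod

lemma smoothPart_le {n : ℕ} (hn : n ≠ 0) (p : ℕ) : smoothPart n p ≤ n :=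
  Nat.le_of_dvd (Nat.pos_of_ne_zero hn) (smoothPart_dvd hn p)

lemma smoothPart_of_mem_smoothNumbers {n p : ℕ} (hn : n ∈ Nat.smoothNumbers p) :
    smoothPart n p = n := by
  rw [smoothPart, List.filter_eq_self.2 fun q hq ↦ by simpa using hn.2 q hq,
    Nat.prod_primeFactorsList hn.1]

lemma smoothPart_prime_pow {p q : ℕ} (hp : p.Prime) (e : ℕ) (hq : q ≤ p) :
    smoothPart (p ^ e) q = 1 := by
  induction e with
  | zero => simp [smoothPart]
  | succ e ih =>
    rw [pow_succ, smoothPart_mul (pow_ne_zero _ hp.ne_zero) hp.ne_zero, ih, smoothPart_prime hp,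
      if_neg hq.not_gt]

lemma smoothPart_mul_le {n p : ℕ} (hn : n ≠ 0) (hp : p.Prime) (hpn : p ∣ n) :
    smoothPart n p * p ≤ n := by
  obtain ⟨a, rfl⟩ := hpn
  have ha : a ≠ 0 := right_ne_zero_of_mul hn
  rw [smoothPart_mul hp.ne_zero ha, smoothPart_prime hp, if_neg (lt_irrefl _), one_mul, mul_comm]
  exact Nat.mul_le_mul_left _ (smoothPart_le ha p)

lemma smoothPart_congr {n p q : ℕ} (h : ∀ r : ℕ, r.Prime → r ∣ n → (r < p ↔ r < q)) :
    smoothPart n p = smoothPart n q := by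
  unfold smoothPart
  congr 1
  exact List.filter_congr fun r hr ↦ by
    simpa using h r (Nat.prime_of_mem_primeFactorsList hr) (Nat.dvd_of_mem_primeFactorsList hr)

/-- `IsDense z t n` says that `n` is positive, that its prime factors exceed `z`, and that every
prime factor `p` of `n` is at most `t` times the product of the smaller ones. When `z = 0` these
are the integers whose divisors, in increasing order, have consecutive ratios at most `t`. -/
def IsDense (z t n : ℕ) : Prop :=
  n ≠ 0 ∧ ∀ p : ℕ, p.Prime → p ∣ n → z < p ∧ p ≤ t * smoothPart n p

lemma isDense_one (z t : ℕ) : IsDense z t 1 :=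
  ⟨one_ne_zero, fun _ hp h ↦ absurd (Nat.dvd_one.1 h) hp.ne_one⟩

lemma IsDense.prime_sq_le (h : IsDense z t n) (hp : p.Prime) (hpn : p ∣ n) : p ^ 2 ≤ t * n :=
  calc p ^ 2 = p * p := sq p
    _ ≤ t * smoothPart n p * p := Nat.mul_le_mul_right _ (h.2 p hp hpn).2
    _ = t * (smoothPart n p * p) := mul_assoc _ _ _
    _ ≤ t * n := Nat.mul_le_mul_left _ (smoothPart_mul_le h.1 hp hpn)

lemma isDense_prime_pow_mul_iff {e : ℕ} (hp : p.Prime) (hn : n ∈ Nat.smoothNumbers p) :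
    IsDense z t (p ^ e * n) ↔ IsDense z t n ∧ (e = 0 ∨ z < p ∧ p ≤ t * n) := by
  have hpe : p ^ e ≠ 0 := pow_ne_zero _ hp.ne_zero
  have hpart {q : ℕ} (hq : q ≤ p) : smoothPart (p ^ e * n) q = smoothPart n q := by
    rw [smoothPart_mul hpe hn.1, smoothPart_prime_pow hp e hq, one_mul]
  have hlt {q : ℕ} (hq : q.Prime) (hqn : q ∣ n) : q < p :=
    hn.2 q ((Nat.mem_primeFactorsList hn.1).2 ⟨hq, hqn⟩)
  constructor
  · rintro ⟨-, h⟩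
    refine ⟨⟨hn.1, fun q hq hqn ↦ ?_⟩, or_iff_not_imp_left.2 fun he ↦ ?_⟩
    · simpa only [hpart (hlt hq hqn).le] using h q hq (hqn.mul_left _)
    · simpa only [hpart le_rfl, smoothPart_of_mem_smoothNumbers hn] using
        h p hp ((dvd_pow_self p he).mul_right n)
  · rintro ⟨h, hep⟩
    refine ⟨mul_ne_zero hpe hn.1, fun q hq hqd ↦ ?_⟩
    rcases hq.dvd_mul.1 hqd with hqp | hqn
    · obtain rfl := (Nat.prime_dvd_prime_iff_eq hq hp).1 (hq.dvd_of_dvd_pow hqp)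
      have he : e ≠ 0 := by
        rintro rfl
        exact hq.not_dvd_one (by simpa using hqp)
      simpa only [hpart le_rfl, smoothPart_of_mem_smoothNumbers hn] using hep.resolve_left he
    · simpa only [hpart (hlt hq hqn).le] using h.2 q hq hqn

/-- If `p ∤ n`, the least prime factor `r > p` of `n` (if any) satisfies
`p < r ≤ t * smoothPart n r` and `smoothPart n r = smoothPart n p`. -/
lemma IsDense.le_mul_smoothPart (h : IsDense z t n) (hpn : ¬ p ∣ n) (hpt : p ≤ t * n) :
    p ≤ t * smoothPart n p := by
  classical
  by_cases hex : ∃ r, r.Prime ∧ r ∣ n ∧ p < r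
  · obtain ⟨hr, hrn, hpr⟩ := Nat.find_spec hex
    have hpart : smoothPart n (Nat.find hex) = smoothPart n p := by
      refine smoothPart_congr fun q hq hqn ↦ ⟨fun hqr ↦ ?_, fun hqp ↦ hqp.trans hpr⟩
      have hqp : ¬ p < q := fun hpq ↦ Nat.find_min hex hqr ⟨hq, hqn, hpq⟩
      exact lt_of_le_of_ne (not_lt.1 hqp) fun heq ↦ hpn (heq ▸ hqn)
    exact hpr.le.trans (hpart ▸ (h.2 _ hr hrn).2)
  · push Not at hex
    have hsmooth : n ∈ Nat.smoothNumbers p := by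
      refine ⟨h.1, fun q hq ↦ ?_⟩
      obtain ⟨hqp, hqn⟩ := (Nat.mem_primeFactorsList h.1).1 hq
      exact lt_of_le_of_ne (hex q hqp hqn) fun heq ↦ hpn (heq ▸ hqn)
    rwa [smoothPart_of_mem_smoothNumbers hsmooth]

lemma IsDense.mul_prime (h : IsDense z t n) (hp : p.Prime) (hzp : z < p) (hpt : p ≤ t * n) :
    IsDense z t (n * p) := by
  refine ⟨mul_ne_zero h.1 hp.ne_zero, fun q hq hqd ↦ ?_⟩
  have hpart : smoothPart n q ≤ smoothPart (n * p) q := by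
    rw [smoothPart_mul h.1 hp.ne_zero, smoothPart_prime hp]
    refine Nat.le_mul_of_pos_right _ ?_
    split_ifs
    exacts [hp.pos, one_pos]
  by_cases hqn : q ∣ n
  · exact ⟨(h.2 q hq hqn).1, (h.2 q hq hqn).2.trans (Nat.mul_le_mul_left _ hpart)⟩
  · obtain rfl := (Nat.prime_dvd_prime_iff_eq hq hp).1 ((hq.dvd_mul.1 hqd).resolve_left hqn)
    exact ⟨hzp, (h.le_mul_smoothPart hqn hpt).trans (Nat.mul_le_mul_left _ hpart)⟩

lemma exists_eq_prime_pow_mul_smooth {n : ℕ} (hn : 1 < n) :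
    ∃ p e m : ℕ, p.Prime ∧ m ∈ Nat.smoothNumbers p ∧ n = p ^ (e + 1) * m := by
  have hne : n.primeFactors.Nonempty := Nat.nonempty_primeFactors.2 hn
  obtain ⟨hp, hpn, hn0⟩ := Nat.mem_primeFactors.1 (n.primeFactors.max'_mem hne)
  set p := n.primeFactors.max' hne
  have hsmooth : n ∈ Nat.smoothNumbers (p + 1) := by
    refine ⟨hn0, fun q hq ↦ Nat.lt_succ_of_le (le_max' _ _ ?_)⟩
    rwa [Nat.mem_primeFactors_iff_mem_primeFactorsList]
  obtain ⟨⟨e, m⟩, hem⟩ := (Nat.equivProdNatSmoothNumbers hp).surjective ⟨n, hsmooth⟩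
  have hn_eq : n = p ^ e * m := by simpa using (congrArg Subtype.val hem).symm
  have he : e ≠ 0 := by
    rintro rfl
    rw [pow_zero, one_mul] at hn_eq
    exact lt_irrefl _ (m.2.2 p ((Nat.mem_primeFactorsList m.2.1).2 ⟨hp, hn_eq ▸ hpn⟩))
  obtain ⟨e, rfl⟩ := Nat.exists_eq_succ_of_ne_zero he
  exact ⟨p, e, m, hp, m.2, hn_eq⟩

lemma IsDense.exists_eq_mul_prime (h : IsDense z t n) (hn : n ≠ 1) :
    ∃ m p : ℕ, n = m * p ∧ p.Prime ∧ IsDense z t m ∧ m ∈ Nat.smoothNumbers (p + 1) ∧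
      p ≤ t * m := by
  obtain ⟨p, e, m, hp, hm, rfl⟩ := exists_eq_prime_pow_mul_smooth
    (lt_of_le_of_ne (Nat.pos_of_ne_zero h.1) hn.symm)
  obtain ⟨hdense, hpt⟩ := (isDense_prime_pow_mul_iff hp hm).1 h
  have hpt := hpt.resolve_left e.succ_ne_zero
  refine ⟨p ^ e * m, p, by ring, hp, (isDense_prime_pow_mul_iff hp hm).2 ⟨hdense, Or.inr hpt⟩,
    Nat.pow_mul_mem_smoothNumbers hp.ne_zero e hm, hpt.2.trans (Nat.mul_le_mul_left _ ?_)⟩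
  exact Nat.le_mul_of_pos_left _ (pow_pos hp.pos _)

/-! ### A probability measure on the dense integers -/

/-- The finite Euler product `∏ (1 - p ^ (-s))` over `p ∈ P`. -/
noncomputable def eulerProduct (P : Finset ℕ) (s : ℝ) : ℝ := ∏ p ∈ P, (1 - (p : ℝ) ^ (-s))

/-- The primes `p < N` with `z < p ≤ y`. -/
def sievePrimes (z N y : ℕ) : Finset ℕ := {p ∈ Nat.primesLE y | z < p ∧ p < N}

open Classical in
/-- The weight `m ^ (-s) * ∏ (1 - p ^ (-s))`, the product being over the primes `z < p ≤ t * m` with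
`p < N`, of an `N`-smooth dense integer `m`; it is zero at other integers. For `s = 1` it is the
density of the integers whose prime factors in `(z, N)`, multiplied together in increasing order,
have `m` as their longest dense initial product. -/
noncomputable def denseWeight (z t N : ℕ) (s : ℝ) (m : ℕ) : ℝ :=
  if IsDense z t m ∧ m ∈ Nat.smoothNumbers N then
    (m : ℝ) ^ (-s) * eulerProduct (sievePrimes z N (t * m)) s
  else 0

lemma mem_sievePrimes : p ∈ sievePrimes z N y ↔ (p ≤ y ∧ p.Prime) ∧ z < p ∧ p < N := by
  rw [sievePrimes, mem_filter, Nat.mem_primesLE]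

lemma sievePrimes_subset (z N y : ℕ) : sievePrimes z N y ⊆ Nat.primesLE y := filter_subset _ _

lemma two_le_of_mem_sievePrimes (hp : p ∈ sievePrimes z N y) : 2 ≤ p :=
  (mem_sievePrimes.1 hp).1.2.two_le

lemma rpow_neg_lt_one (hp : 2 ≤ p) (hs : 0 < s) : (p : ℝ) ^ (-s) < 1 :=
  rpow_lt_one_of_one_lt_of_neg (by exact_mod_cast hp) (by linarith)

lemma eulerProduct_pos {P : Finset ℕ} (hP : ∀ p ∈ P, 2 ≤ p) (hs : 0 < s) :
    0 < eulerProduct P s :=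
  prod_pos fun p hp ↦ sub_pos.2 (rpow_neg_lt_one (hP p hp) hs)

lemma denseWeight_nonneg (z t N : ℕ) (hs : 0 < s) (m : ℕ) : 0 ≤ denseWeight z t N s m := by
  unfold denseWeight
  split_ifs
  · exact mul_nonneg (by positivity) (eulerProduct_pos (fun _ ↦ two_le_of_mem_sievePrimes) hs).le
  · exact le_rfl

lemma denseWeight_of_isDense (h : IsDense z t m) (hm : m ∈ Nat.smoothNumbers N) :
    denseWeight z t N s m = (m : ℝ) ^ (-s) * eulerProduct (sievePrimes z N (t * m)) s :=
  if_pos ⟨h, hm⟩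

lemma denseWeight_of_not_isDense (h : ¬ IsDense z t m) : denseWeight z t N s m = 0 :=
  if_neg fun h' ↦ h h'.1

lemma denseWeight_of_notMem_smoothNumbers (h : m ∉ Nat.smoothNumbers N) :
    denseWeight z t N s m = 0 :=
  if_neg fun h' ↦ h h'.2

lemma sievePrimes_succ_of_not (h : ¬ ((N ≤ y ∧ N.Prime) ∧ z < N)) :
    sievePrimes z (N + 1) y = sievePrimes z N y := by
  ext p
  simp only [mem_sievePrimes, Nat.lt_succ_iff_lt_or_eq]
  constructor
  · rintro ⟨hp, hzp, hpN | rfl⟩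
    exacts [⟨hp, hzp, hpN⟩, absurd ⟨hp, hzp⟩ h]
  · tauto

lemma sievePrimes_succ_of_prime (hN : N.Prime) (hzN : z < N) (hNy : N ≤ y) :
    sievePrimes z (N + 1) y = insert N (sievePrimes z N y) := by
  ext p
  simp only [mem_sievePrimes, mem_insert, Nat.lt_succ_iff_lt_or_eq]
  constructor
  · tauto
  · rintro (rfl | h)
    · exact ⟨⟨hNy, hN⟩, hzN, Or.inr rfl⟩
    · tauto

lemma sievePrimes_eq_of_le {y' : ℕ} (h : N ≤ y) (h' : N ≤ y') :
    sievePrimes z N y = sievePrimes z N y' := by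
  ext p
  simp only [mem_sievePrimes]
  constructor <;> rintro ⟨⟨-, hp⟩, hzp, hpN⟩ <;> exact ⟨⟨by omega, hp⟩, hzp, hpN⟩

lemma denseWeight_succ_prime_pow_mul (hN : N.Prime) (hm : m ∈ Nat.smoothNumbers N)
    (hdense : IsDense z t m) (hzN : z < N) (hNt : N ≤ t * m) (e : ℕ) :
    denseWeight z t (N + 1) s (N ^ e * m) =
      denseWeight z t N s m * (1 - (N : ℝ) ^ (-s)) * ((N : ℝ) ^ (-s)) ^ e := by
  have hle : N ≤ t * (N ^ e * m) :=
    hNt.trans (Nat.mul_le_mul_left _ (Nat.le_mul_of_pos_left _ (pow_pos hN.pos _)))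
  rw [denseWeight_of_isDense ((isDense_prime_pow_mul_iff hN hm).2 ⟨hdense, Or.inr ⟨hzN, hNt⟩⟩)
    (Nat.pow_mul_mem_smoothNumbers hN.ne_zero e hm), denseWeight_of_isDense hdense hm,
    sievePrimes_succ_of_prime hN hzN hle, sievePrimes_eq_of_le hle hNt, eulerProduct,
    prod_insert (by simp [mem_sievePrimes]), ← eulerProduct, Nat.cast_mul, Nat.cast_pow,
    mul_rpow (by positivity) (by positivity), rpow_pow_comm N.cast_nonneg]
  ring

lemma hasSum_denseWeight_prime_pow_mul (hN : N.Prime) (hs : 0 < s)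
    (hm : m ∈ Nat.smoothNumbers N) :
    HasSum (fun e ↦ denseWeight z t (N + 1) s (N ^ e * m)) (denseWeight z t N s m) := by
  by_cases hdense : IsDense z t m
  · by_cases hNt : z < N ∧ N ≤ t * m
    · have hlt := rpow_neg_lt_one hN.two_le hs
      have hgeom := (hasSum_geometric_of_lt_one (by positivity) hlt).mul_left
        (denseWeight z t N s m * (1 - (N : ℝ) ^ (-s)))
      rw [mul_inv_cancel_right₀ (sub_ne_zero.2 hlt.ne')] at hgeom
      simpa only [denseWeight_succ_prime_pow_mul hN hm hdense hNt.1 hNt.2] using hgeom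
    · have hzero : denseWeight z t (N + 1) s (N ^ 0 * m) = denseWeight z t N s m := by
        have hsucc : m ∈ Nat.smoothNumbers (N + 1) := by
          simpa using Nat.pow_mul_mem_smoothNumbers hN.ne_zero 0 hm
        rw [pow_zero, one_mul, denseWeight_of_isDense hdense hm,
          denseWeight_of_isDense hdense hsucc, sievePrimes_succ_of_not (by tauto)]
      rw [← hzero]
      refine hasSum_single 0 fun e he ↦ denseWeight_of_not_isDense fun h ↦ hNt ?_
      exact ((isDense_prime_pow_mul_iff hN hm).1 h).2.resolve_left he
  · have hzero (e : ℕ) : denseWeight z t (N + 1) s (N ^ e * m) = 0 :=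
      denseWeight_of_not_isDense fun h ↦ hdense ((isDense_prime_pow_mul_iff hN hm).1 h).1
    simpa only [hzero, denseWeight_of_not_isDense hdense] using hasSum_zero

/-- Induction on `N`: splitting off the `N`-part of an `(N + 1)`-smooth integer leaves a geometric
series. -/
lemma hasSum_denseWeight_smoothNumbers (z t : ℕ) (hs : 0 < s) (N : ℕ) :
    HasSum (fun m : Nat.smoothNumbers N ↦ denseWeight z t N s m) 1 := by
  induction N with
  | zero =>
    rw [Nat.smoothNumbers_zero]
    have h1 : (1 : ℕ) ∈ Nat.smoothNumbers 0 := by simp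
    have hone : denseWeight z t 0 s 1 = 1 := by
      rw [denseWeight_of_isDense (isDense_one z t) h1]
      simp [eulerProduct, sievePrimes]
    rw [← hone]
    exact hasSum_unique fun m : ({1} : Set ℕ) ↦ denseWeight z t 0 s m
  | succ N ih =>
    by_cases hN : N.Prime
    · let f : Nat.smoothNumbers N × ℕ → ℝ := fun q ↦ denseWeight z t (N + 1) s (N ^ q.2 * q.1)
      have hfiber (m : Nat.smoothNumbers N) :
          HasSum (fun e ↦ f (m, e)) (denseWeight z t N s m) :=
        hasSum_denseWeight_prime_pow_mul hN hs m.2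
      have hsummable : Summable f :=
        (summable_prod_of_nonneg fun q ↦ denseWeight_nonneg z t (N + 1) hs _).2
          ⟨fun m ↦ (hfiber m).summable, ih.summable.congr fun m ↦ (hfiber m).tsum_eq.symm⟩
      have hsum : HasSum f 1 :=
        (hsummable.hasSum.prod_fiberwise hfiber).unique ih ▸ hsummable.hasSum
      rw [← (Nat.equivProdNatSmoothNumbers hN).hasSum_iff, ← (Equiv.prodComm _ _).hasSum_iff]
      exact hsum
    · have hsieve (y : ℕ) : sievePrimes z (N + 1) y = sievePrimes z N y :=
        sievePrimes_succ_of_not (by tauto)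
      have hweight : denseWeight z t (N + 1) s = denseWeight z t N s := by
        ext m
        simp only [denseWeight, hsieve]
        congr 1
        rw [Nat.smoothNumbers_succ hN]
      rwa [hweight, Nat.smoothNumbers_succ hN]

lemma hasSum_denseWeight (z t : ℕ) (hs : 0 < s) (N : ℕ) : HasSum (denseWeight z t N s) 1 := by
  refine (hasSum_subtype_iff_of_support_subset fun m hm ↦ ?_).1
    (hasSum_denseWeight_smoothNumbers z t hs N)
  by_contra h
  exact hm (denseWeight_of_notMem_smoothNumbers h)

lemma sum_denseWeight_le_one (z t N : ℕ) (hs : 0 < s) (F : Finset ℕ) :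
    ∑ m ∈ F, denseWeight z t N s m ≤ 1 :=
  sum_le_hasSum F (fun m _ ↦ denseWeight_nonneg z t N hs m) (hasSum_denseWeight z t hs N)

/-! ### Moving the exponent away from one -/

lemma le_one_sub_inv_mul_exp {x : ℝ} (hx : 1 < x) (a : ℝ) :
    1 - x⁻¹ * a ≤ (1 - x⁻¹) * exp ((1 - a) / (x - 1)) := by
  have hx1 : x - 1 ≠ 0 := by linarith
  have hinv : 0 < 1 - x⁻¹ := sub_pos.2 (inv_lt_one_of_one_lt₀ hx)
  calc 1 - x⁻¹ * a = (1 - x⁻¹) * ((1 - a) / (x - 1) + 1) := by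
        field_simp
        ring
    _ ≤ _ := by
        gcongr
        exact add_one_le_exp _

lemma one_sub_inv_mul_exp_le {x a : ℝ} (hx : 1 < x) (ha : a < x) :
    (1 - x⁻¹) * exp ((1 - a) / (x - a)) ≤ 1 - x⁻¹ * a := by
  have hxa : 0 < x - a := sub_pos.2 ha
  have hx0 : x ≠ 0 := by linarith
  have hexp : (x - 1) / (x - a) ≤ exp (-((1 - a) / (x - a))) := by
    refine le_trans (le_of_eq ?_) (add_one_le_exp _)
    field_simp
    ring
  calc (1 - x⁻¹) * exp ((1 - a) / (x - a))
      = (x - a) * x⁻¹ * ((x - 1) / (x - a)) * exp ((1 - a) / (x - a)) := by field_simp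
    _ ≤ (x - a) * x⁻¹ * exp (-((1 - a) / (x - a))) * exp ((1 - a) / (x - a)) := by gcongr
    _ = 1 - x⁻¹ * a := by
        rw [mul_assoc, ← exp_add, neg_add_cancel, exp_zero]
        field_simp

lemma natCast_rpow_neg_one_add (hp : 2 ≤ p) (δ : ℝ) :
    (p : ℝ) ^ (-(1 + δ)) = (p : ℝ)⁻¹ * (p : ℝ) ^ (-δ) := by
  rw [neg_add, rpow_add (by positivity), rpow_neg_one]

lemma eulerProduct_mul_exp_sum_le {P : Finset ℕ} {s' : ℝ} {f : ℕ → ℝ} (hP : ∀ p ∈ P, 2 ≤ p)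
    (hs : 0 < s) (h : ∀ p ∈ P, (1 - (p : ℝ) ^ (-s)) * exp (f p) ≤ 1 - (p : ℝ) ^ (-s')) :
    eulerProduct P s * exp (∑ p ∈ P, f p) ≤ eulerProduct P s' := by
  rw [eulerProduct, exp_sum, ← prod_mul_distrib]
  exact prod_le_prod
    (fun p hp ↦ mul_nonneg (sub_pos.2 (rpow_neg_lt_one (hP p hp) hs)).le (exp_pos _).le) h

lemma eulerProduct_one_add_le {P : Finset ℕ} {δ : ℝ} (hP : ∀ p ∈ P, 2 ≤ p) (hδ : 0 < δ) :
    eulerProduct P (1 + δ) * exp (-∑ p ∈ P, (1 - (p : ℝ) ^ (-δ)) / ((p : ℝ) - 1)) ≤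
      eulerProduct P 1 := by
  rw [← sum_neg_distrib]
  refine eulerProduct_mul_exp_sum_le hP (by linarith) fun p hp ↦ ?_
  rw [exp_neg, ← div_eq_mul_inv, div_le_iff₀ (exp_pos _), natCast_rpow_neg_one_add (hP p hp),
    rpow_neg_one]
  exact le_one_sub_inv_mul_exp (by exact_mod_cast hP p hp) _

lemma le_eulerProduct_one_add {P : Finset ℕ} {δ : ℝ} (hP : ∀ p ∈ P, 2 ≤ p) (hδ : 0 < δ) :
    eulerProduct P 1 * exp (∑ p ∈ P, (1 - (p : ℝ) ^ (-δ)) / p) ≤ eulerProduct P (1 + δ) := by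
  refine eulerProduct_mul_exp_sum_le hP one_pos fun p hp ↦ ?_
  have hp1 : (1 : ℝ) < p := by exact_mod_cast hP p hp
  have hlt := rpow_neg_lt_one (hP p hp) hδ
  have hinv : 0 ≤ 1 - (p : ℝ)⁻¹ := sub_nonneg.2 (inv_le_one_of_one_le₀ hp1.le)
  have hpow : 0 ≤ (p : ℝ) ^ (-δ) := by positivity
  rw [natCast_rpow_neg_one_add (hP p hp), rpow_neg_one]
  refine le_trans ?_ (one_sub_inv_mul_exp_le hp1 (hlt.trans hp1))
  gcongr <;> linarith

lemma le_eulerProduct_one_sub {P : Finset ℕ} {δ : ℝ} (hP : ∀ p ∈ P, 2 ≤ p) (hδ : 0 ≤ δ)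
    (hδ' : δ ≤ 1 / 2) :
    eulerProduct P 1 * exp (-∑ p ∈ P, ((p : ℝ) ^ δ - 1) / ((p : ℝ) - √p)) ≤
      eulerProduct P (1 - δ) := by
  rw [← sum_neg_distrib]
  refine eulerProduct_mul_exp_sum_le hP one_pos fun p hp ↦ ?_
  have hp1 : (1 : ℝ) < p := by exact_mod_cast hP p hp
  have hsqrt : √(p : ℝ) < p := sqrt_lt_self_iff.2 hp1
  have hle : (p : ℝ) ^ δ ≤ √p := sqrt_eq_rpow p ▸ rpow_le_rpow_of_exponent_le hp1.le hδ'
  have hge : 1 ≤ (p : ℝ) ^ δ := one_le_rpow hp1.le hδ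
  have hinv : 0 ≤ 1 - (p : ℝ)⁻¹ := sub_nonneg.2 (inv_le_one_of_one_le₀ hp1.le)
  rw [sub_eq_add_neg 1 δ, natCast_rpow_neg_one_add (hP p hp), rpow_neg_one, neg_neg]
  refine le_trans ?_ (one_sub_inv_mul_exp_le hp1 (hle.trans_lt hsqrt))
  rw [← neg_sub ((p : ℝ) ^ δ) 1, neg_div]
  gcongr

lemma denseWeight_mul_exp_le {s' E : ℝ}
    (h : eulerProduct (sievePrimes z N (t * m)) s * exp E ≤
      eulerProduct (sievePrimes z N (t * m)) s') :
    denseWeight z t N s m * exp ((s - s') * log m + E) ≤ denseWeight z t N s' m := by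
  unfold denseWeight
  split_ifs with hm
  · have hm0 : (0 : ℝ) < m := by exact_mod_cast Nat.pos_of_ne_zero hm.1.1
    have hpow : (m : ℝ) ^ (-s') = (m : ℝ) ^ (-s) * exp ((s - s') * log m) := by
      rw [mul_comm (s - s'), ← rpow_def_of_pos hm0, ← rpow_add hm0]
      ring_nf
    rw [hpow, exp_add]
    calc _ = (m : ℝ) ^ (-s) * exp ((s - s') * log m) *
          (eulerProduct (sievePrimes z N (t * m)) s * exp E) := by ring
      _ ≤ _ := by gcongr
  · rw [zero_mul]

section Transfer

variable {E : ℝ}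

lemma denseWeight_one_add_le (hδ : 0 < δ)
    (hE : ∑ p ∈ sievePrimes z N (t * m), (1 - (p : ℝ) ^ (-δ)) / ((p : ℝ) - 1) ≤ E) :
    denseWeight z t N (1 + δ) m ≤ denseWeight z t N 1 m * exp (E - δ * log m) := by
  have hs : 0 < 1 + δ := by linarith
  have hpos : 0 < eulerProduct (sievePrimes z N (t * m)) (1 + δ) :=
    eulerProduct_pos (fun _ ↦ two_le_of_mem_sievePrimes) hs
  have hprod : eulerProduct (sievePrimes z N (t * m)) (1 + δ) * exp (-E) ≤
      eulerProduct (sievePrimes z N (t * m)) 1 := by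
    refine le_trans ?_ (eulerProduct_one_add_le (fun _ ↦ two_le_of_mem_sievePrimes) hδ)
    gcongr
  have h := denseWeight_mul_exp_le hprod
  rwa [show (1 + δ - 1) * log m + -E = -(E - δ * log m) by ring, exp_neg, ← div_eq_mul_inv,
    div_le_iff₀ (exp_pos _)] at h

lemma le_denseWeight_one_add (hδ : 0 < δ)
    (hE : E ≤ ∑ p ∈ sievePrimes z N (t * m), (1 - (p : ℝ) ^ (-δ)) / p) :
    denseWeight z t N 1 m * exp (E - δ * log m) ≤ denseWeight z t N (1 + δ) m := by
  have hpos : 0 < eulerProduct (sievePrimes z N (t * m)) 1 :=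
    eulerProduct_pos (fun _ ↦ two_le_of_mem_sievePrimes) one_pos
  have hprod : eulerProduct (sievePrimes z N (t * m)) 1 * exp E ≤
      eulerProduct (sievePrimes z N (t * m)) (1 + δ) := by
    refine le_trans ?_ (le_eulerProduct_one_add (fun _ ↦ two_le_of_mem_sievePrimes) hδ)
    gcongr
  have h := denseWeight_mul_exp_le hprod
  rwa [show (1 - (1 + δ)) * log m + E = E - δ * log m by ring] at h

lemma le_denseWeight_one_sub (hδ : 0 ≤ δ) (hδ' : δ ≤ 1 / 2)
    (hE : ∑ p ∈ sievePrimes z N (t * m), ((p : ℝ) ^ δ - 1) / ((p : ℝ) - √p) ≤ E) :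
    denseWeight z t N 1 m * exp (δ * log m - E) ≤ denseWeight z t N (1 - δ) m := by
  have hpos : 0 < eulerProduct (sievePrimes z N (t * m)) 1 :=
    eulerProduct_pos (fun _ ↦ two_le_of_mem_sievePrimes) one_pos
  have hprod : eulerProduct (sievePrimes z N (t * m)) 1 * exp (-E) ≤
      eulerProduct (sievePrimes z N (t * m)) (1 - δ) := by
    refine le_trans ?_ (le_eulerProduct_one_sub (fun _ ↦ two_le_of_mem_sievePrimes) hδ hδ')
    gcongr
  have h := denseWeight_mul_exp_le hprod
  rwa [show (1 - (1 - δ)) * log m + -E = δ * log m - E by ring] at h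

end Transfer

/-! ### Exponent bounds -/

lemma one_sub_rpow_neg_le {p : ℕ} (hp : 2 ≤ p) (δ : ℝ) : 1 - (p : ℝ) ^ (-δ) ≤ δ * log p := by
  rw [rpow_def_of_pos (by positivity)]
  linarith [add_one_le_exp (log p * -δ)]

lemma sub_sqrt_pos {p : ℕ} (hp : 2 ≤ p) : 0 < (p : ℝ) - √p :=
  sub_pos.2 (sqrt_lt_self_iff.2 (by exact_mod_cast hp))

lemma sub_sqrt_le_sub_one {p : ℕ} (hp : 2 ≤ p) : (p : ℝ) - √p ≤ p - 1 := by
  gcongr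
  exact one_le_sqrt.2 (by exact_mod_cast (by omega : 1 ≤ p))

lemma log_div_sub_one_le {p : ℕ} (hp : 2 ≤ p) :
    log p / ((p : ℝ) - 1) ≤ log p / ((p : ℝ) - √p) :=
  div_le_div_of_nonneg_left (log_natCast_nonneg p) (sub_sqrt_pos hp) (sub_sqrt_le_sub_one hp)

lemma one_sub_rpow_neg_div_le {p : ℕ} (hp : 2 ≤ p) {δ : ℝ} (hδ : 0 ≤ δ) :
    (1 - (p : ℝ) ^ (-δ)) / ((p : ℝ) - 1) ≤ δ * (log p / ((p : ℝ) - √p)) := by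
  have hp1 : (0 : ℝ) < p - 1 := (sub_sqrt_pos hp).trans_le (sub_sqrt_le_sub_one hp)
  calc (1 - (p : ℝ) ^ (-δ)) / ((p : ℝ) - 1) ≤ δ * log p / ((p : ℝ) - 1) := by
        gcongr
        exact one_sub_rpow_neg_le hp δ
    _ = δ * (log p / ((p : ℝ) - 1)) := mul_div_assoc _ _ _
    _ ≤ _ := mul_le_mul_of_nonneg_left (log_div_sub_one_le hp) hδ

lemma one_sub_rpow_neg_div_le_half {p : ℕ} (hp : 2 ≤ p) {δ : ℝ} (h : 2 ≤ δ * log p) :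
    (1 - (p : ℝ) ^ (-δ)) / ((p : ℝ) - 1) ≤ δ / 2 * (log p / ((p : ℝ) - √p)) := by
  have hp1 : (0 : ℝ) < p - 1 := (sub_sqrt_pos hp).trans_le (sub_sqrt_le_sub_one hp)
  have hlog : 0 < log p := log_pos (by linarith)
  have hδ : 0 < δ := pos_of_mul_pos_left (by linarith) hlog.le
  have hpow : 0 ≤ (p : ℝ) ^ (-δ) := by positivity
  calc (1 - (p : ℝ) ^ (-δ)) / ((p : ℝ) - 1) ≤ δ / 2 * log p / ((p : ℝ) - 1) := by
        gcongr
        linarith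
    _ = δ / 2 * (log p / ((p : ℝ) - 1)) := mul_div_assoc _ _ _
    _ ≤ _ := mul_le_mul_of_nonneg_left (log_div_sub_one_le hp) (by positivity)

/-- The second bound is what makes large `y` cost only half of the trivial exponent: primes above
`exp (2 / δ)` satisfy `1 - p ^ (-δ) ≤ 1 ≤ δ / 2 * log p`. -/
lemma exists_sum_one_sub_rpow_neg_div_le : ∃ C : ℝ, 0 ≤ C ∧ ∀ y P δ, P ⊆ Nat.primesLE y → 0 < δ →
    ∑ p ∈ P, (1 - (p : ℝ) ^ (-δ)) / ((p : ℝ) - 1) ≤ δ * (log y + C) ∧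
    ∑ p ∈ P, (1 - (p : ℝ) ^ (-δ)) / ((p : ℝ) - 1) ≤ δ / 2 * log y + 1 + δ * C := by
  obtain ⟨C, hC₀, hC⟩ := exists_sum_log_div_sub_sqrt_le
  refine ⟨C, hC₀, fun y P δ hP hδ ↦ ?_⟩
  have htwo {p : ℕ} (hp : p ∈ P) : 2 ≤ p := (Nat.mem_primesLE.1 (hP hp)).2.two_le
  constructor
  · refine le_trans ?_ (mul_le_mul_of_nonneg_left (hC y P hP) hδ.le)
    rw [mul_sum]
    exact sum_le_sum fun p hp ↦ one_sub_rpow_neg_div_le (htwo hp) hδ.le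
  set q := ⌊exp (2 / δ)⌋₊
  have hq : log q ≤ 2 / δ := by
    rw [log_le_iff_le_exp (by exact_mod_cast Nat.floor_pos.2 (one_le_exp (by positivity)))]
    exact Nat.floor_le (exp_pos _).le
  have hpt : ∀ p ∈ P, (1 - (p : ℝ) ^ (-δ)) / ((p : ℝ) - 1) ≤
      δ / 2 * (log p / ((p : ℝ) - √p) + if p ≤ q then log p / ((p : ℝ) - √p) else 0) := by
    intro p hp
    split_ifs with hpq
    · linarith [one_sub_rpow_neg_div_le (htwo hp) hδ.le]
    · rw [add_zero]
      refine one_sub_rpow_neg_div_le_half (htwo hp) ?_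
      have hlt := (Nat.floor_lt (exp_pos _).le).1 (not_le.1 hpq)
      have hlog := (lt_log_iff_exp_lt ((exp_pos _).trans hlt)).2 hlt
      rw [div_lt_iff₀ hδ] at hlog
      linarith
  have hsmall := hC q {p ∈ P | p ≤ q} fun p hp ↦ by
    rw [mem_filter] at hp
    exact Nat.mem_primesLE.2 ⟨hp.2, (Nat.mem_primesLE.1 (hP hp.1)).2⟩
  calc _ ≤ δ / 2 * (∑ p ∈ P, log p / ((p : ℝ) - √p) +
        ∑ p ∈ P with p ≤ q, log p / ((p : ℝ) - √p)) := by
        rw [sum_filter, ← sum_add_distrib, mul_sum]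
        exact sum_le_sum hpt
    _ ≤ δ / 2 * ((log y + C) + (2 / δ + C)) := by
        gcongr
        exacts [hC y P hP, hsmall.trans (by gcongr)]
    _ = δ / 2 * log y + 1 + δ * C := by
        field_simp
        ring

lemma rpow_sub_one_le {p : ℕ} (hp : 2 ≤ p) {δ : ℝ} (hδ : 0 ≤ δ) (h : δ * log p ≤ 1) :
    (p : ℝ) ^ δ - 1 ≤ δ * log p + (δ * log p) ^ 2 := by
  have hnonneg : 0 ≤ δ * log p := mul_nonneg hδ (log_natCast_nonneg p)
  have hexp := abs_exp_sub_one_sub_id_le (by rwa [abs_of_nonneg hnonneg])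
  rw [rpow_def_of_pos (by positivity), mul_comm]
  linarith [(abs_le.1 hexp).2]

lemma exists_sum_rpow_sub_one_div_le : ∃ C : ℝ, 0 ≤ C ∧ ∀ y P δ, P ⊆ Nat.primesLE y → 0 ≤ δ →
    (∀ p ∈ P, δ * log p ≤ 1) →
    ∑ p ∈ P, ((p : ℝ) ^ δ - 1) / ((p : ℝ) - √p) ≤ 2 * δ * (log y + C) ∧
    ∑ p ∈ P, ((p : ℝ) ^ δ - 1) / ((p : ℝ) - √p) ≤ (δ + δ ^ 2 * log y) * (log y + C) := by
  obtain ⟨C, hC₀, hC⟩ := exists_sum_log_div_sub_sqrt_le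
  refine ⟨C, hC₀, fun y P δ hP hδ hδP ↦ ?_⟩
  have htwo {p : ℕ} (hp : p ∈ P) : 2 ≤ p := (Nat.mem_primesLE.1 (hP hp)).2.two_le
  have hsum {a : ℝ} (ha : 0 ≤ a) (h : ∀ p ∈ P, (p : ℝ) ^ δ - 1 ≤ a * log p) :
      ∑ p ∈ P, ((p : ℝ) ^ δ - 1) / ((p : ℝ) - √p) ≤ a * (log y + C) := by
    refine le_trans ?_ (mul_le_mul_of_nonneg_left (hC y P hP) ha)
    rw [mul_sum]
    refine sum_le_sum fun p hp ↦ ?_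
    rw [← mul_div_assoc]
    exact div_le_div_of_nonneg_right (h p hp) (sub_sqrt_pos (htwo hp)).le
  refine ⟨hsum (by positivity) fun p hp ↦ ?_, hsum (by positivity) fun p hp ↦ ?_⟩
  · have hnonneg : 0 ≤ δ * log p := mul_nonneg hδ (log_natCast_nonneg p)
    nlinarith [rpow_sub_one_le (htwo hp) hδ (hδP p hp), hδP p hp]
  · have hlogp : log p ≤ log y := log_le_log (Nat.cast_pos.2 (two_pos.trans_le (htwo hp)))
      (by exact_mod_cast (Nat.mem_primesLE.1 (hP hp)).1)
    have hmul : δ ^ 2 * log p * log p ≤ δ ^ 2 * log y * log p := by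
      have := log_natCast_nonneg p
      gcongr
    nlinarith [rpow_sub_one_le (htwo hp) hδ (hδP p hp)]

/-! ### Tail and second logarithmic moment of the measure -/

lemma denseWeight_zero (z t N : ℕ) (s : ℝ) : denseWeight z t N s 0 = 0 :=
  denseWeight_of_not_isDense fun h ↦ h.1 rfl

lemma log_natCast_mul (ht : 1 ≤ t) (hm : m ≠ 0) : log ((t * m : ℕ) : ℝ) = log t + log m := by
  rw [Nat.cast_mul, log_mul (by positivity) (by positivity)]

lemma sum_denseWeight_le_of_le {δ a : ℝ} {F : Finset ℕ} (hδ : 0 < δ) (ha : 0 ≤ a)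
    (hle : ∀ m, denseWeight z t N (1 + δ) m ≤ (1 + a) * denseWeight z t N 1 m)
    (hF : ∀ m ∈ F, denseWeight z t N (1 + δ) m ≤ 2 / 3 * denseWeight z t N 1 m) :
    ∑ m ∈ F, denseWeight z t N 1 m ≤ 3 * a := by
  have hsum := ((hasSum_denseWeight z t one_pos N).mul_left (1 + a)).sub
    (hasSum_denseWeight z t (add_pos one_pos hδ) N)
  have hthird : ∑ m ∈ F, 1 / 3 * denseWeight z t N 1 m ≤ (1 + a) * 1 - 1 := by
    refine le_trans (sum_le_sum fun m hm ↦ ?_)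
      (sum_le_hasSum F (fun m _ ↦ sub_nonneg.2 (hle m)) hsum)
    nlinarith [hF m hm, denseWeight_nonneg z t N one_pos m]
  rw [← mul_sum] at hthird
  linarith

/-- Rankin's trick with exponent `1 + 4 / log y`: the total mass at this exponent is still `1`,
although the weights of the integers `m ≥ y` have decreased by a constant factor. -/
lemma exists_sum_denseWeight_tail_le : ∃ C : ℝ, 1 ≤ C ∧ ∀ (z t N : ℕ) (y : ℝ) (F : Finset ℕ),
    1 ≤ t → 1 < y → (∀ m ∈ F, y ≤ m) →
      ∑ m ∈ F, denseWeight z t N 1 m ≤ C * (log t + 1) / log y := by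
  obtain ⟨C, hC₀, hC⟩ := exists_sum_one_sub_rpow_neg_div_le
  refine ⟨24 * (C + 1), by linarith, fun z t N y F ht hy hF ↦ ?_⟩
  have hlogy : 0 < log y := log_pos hy
  have hlogt : 0 ≤ log t := log_natCast_nonneg t
  set δ := 4 / log y
  have hδ : 0 < δ := by positivity
  have hδy : δ * log y = 4 := div_mul_cancel₀ _ hlogy.ne'
  set b := δ * (log t + C) with hb_def
  have hb : 0 ≤ b := by positivity
  suffices ∑ m ∈ F, denseWeight z t N 1 m ≤ 3 * (2 * b) by
    refine this.trans ?_
    rw [le_div_iff₀ hlogy, hb_def]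
    nlinarith
  obtain hbig | hsmall := le_or_gt (1 / 2) b
  · linarith [sum_denseWeight_le_one z t N one_pos F]
  refine sum_denseWeight_le_of_le hδ (by positivity) (fun m ↦ ?_) fun m hm ↦ ?_
  · rcases eq_or_ne m 0 with rfl | hm
    · simp [denseWeight_zero]
    have h := denseWeight_one_add_le (N := N) hδ (hC (t * m) _ δ (sievePrimes_subset z N _) hδ).1
    rw [mul_comm (1 + 2 * b)]
    refine h.trans (mul_le_mul_of_nonneg_left ?_ (denseWeight_nonneg z t N one_pos m))
    rw [log_natCast_mul ht hm, show δ * (log t + log m + C) - δ * log m = b by ring]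
    refine (exp_bound_div_one_sub_of_interval hb (by linarith)).trans ?_
    rw [div_le_iff₀ (by linarith)]
    nlinarith
  · have hym := hF m hm
    have hm0 : m ≠ 0 := by
      rintro rfl
      rw [Nat.cast_zero] at hym
      linarith
    have hlogm : 4 ≤ δ * log m := hδy ▸ by gcongr
    have h := denseWeight_one_add_le (N := N) hδ (hC (t * m) _ δ (sievePrimes_subset z N _) hδ).2
    rw [mul_comm (2 / 3)]
    refine h.trans (mul_le_mul_of_nonneg_left ?_ (denseWeight_nonneg z t N one_pos m))
    rw [log_natCast_mul ht hm0]
    calc _ ≤ exp (-(1 / 2)) := by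
          gcongr
          nlinarith [mul_nonneg hδ.le hlogt]
      _ ≤ 2 / 3 := by
          rw [exp_neg, inv_le_comm₀ (exp_pos _) (by norm_num)]
          linarith [add_one_le_exp (1 / 2 : ℝ)]

lemma sum_range_two_mul_add_one (n : ℕ) : ∑ k ∈ range n, (2 * (k : ℝ) + 1) = (n : ℝ) ^ 2 := by
  induction n with
  | zero => simp
  | succ n ih =>
    rw [sum_range_succ, ih]
    push_cast
    ring

lemma sq_le_sum_range_floor {v L : ℝ} (hv : 0 ≤ v) (hvL : v ≤ L) :
    v ^ 2 ≤ ∑ k ∈ range (⌊L⌋₊ + 1), if (k : ℝ) ≤ v then 2 * (k : ℝ) + 1 else 0 := by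
  have hfilter : {k ∈ range (⌊L⌋₊ + 1) | ((k : ℕ) : ℝ) ≤ v} = range (⌊v⌋₊ + 1) := by
    ext k
    simp only [mem_filter, mem_range, Nat.lt_succ_iff, Nat.le_floor_iff hv,
      Nat.le_floor_iff (hv.trans hvL), and_iff_right_iff_imp]
    exact fun h ↦ h.trans hvL
  rw [← sum_filter, hfilter, sum_range_two_mul_add_one]
  push_cast
  gcongr
  exact (Nat.lt_floor_add_one v).le

lemma sum_mul_sq_le_of_tail_le {ι : Type*} {F : Finset ι} {f v : ι → ℝ} {A L : ℝ} (hL : 0 ≤ L)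
    (hf : ∀ i ∈ F, 0 ≤ f i) (hv : ∀ i ∈ F, 0 ≤ v i ∧ v i ≤ L) (hA : 0 ≤ A)
    (hsum : ∑ i ∈ F, f i ≤ 1)
    (htail : ∀ k : ℕ, 1 ≤ k → ∑ i ∈ F with k ≤ v i, f i ≤ A / k) :
    ∑ i ∈ F, f i * v i ^ 2 ≤ 1 + 3 * A * L := by
  have hlevel (k : ℕ) : (2 * ((k + 1 : ℕ) : ℝ) + 1) * ∑ i ∈ F with (k + 1 : ℕ) ≤ v i, f i ≤
      3 * A := by
    calc _ ≤ (3 * ((k + 1 : ℕ) : ℝ)) * (A / (k + 1 : ℕ)) := by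
          refine mul_le_mul ?_ (htail _ k.succ_pos) (sum_nonneg fun i hi ↦ ?_) (by positivity)
          · push_cast
            linarith [k.cast_nonneg (α := ℝ)]
          · exact hf i (mem_filter.1 hi).1
      _ = _ := by field_simp
  calc ∑ i ∈ F, f i * v i ^ 2
      ≤ ∑ i ∈ F, f i * ∑ k ∈ range (⌊L⌋₊ + 1), if (k : ℝ) ≤ v i then 2 * (k : ℝ) + 1 else 0 :=
        sum_le_sum fun i hi ↦ mul_le_mul_of_nonneg_left
          (sq_le_sum_range_floor (hv i hi).1 (hv i hi).2) (hf i hi)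
    _ = ∑ k ∈ range (⌊L⌋₊ + 1), (2 * (k : ℝ) + 1) * ∑ i ∈ F with k ≤ v i, f i := by
        simp_rw [mul_sum, sum_filter]
        rw [sum_comm]
        refine sum_congr rfl fun k _ ↦ sum_congr rfl fun i _ ↦ ?_
        split_ifs <;> ring
    _ ≤ ⌊L⌋₊ * (3 * A) + 1 := by
        rw [sum_range_succ']
        gcongr
        · exact (sum_le_sum fun k _ ↦ hlevel k).trans (by simp)
        · rw [filter_true_of_mem fun i hi ↦ by simpa using (hv i hi).1]
          simpa using hsum
    _ ≤ 1 + 3 * A * L := by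
        nlinarith [Nat.floor_le hL]

lemma exists_sum_denseWeight_mul_log_sq_le : ∃ C : ℝ, 1 ≤ C ∧
    ∀ (z t N : ℕ) (L : ℝ) (F : Finset ℕ), 1 ≤ t → log t + 1 ≤ L →
      (∀ m ∈ F, m ≠ 0 ∧ log m ≤ L) →
        ∑ m ∈ F, denseWeight z t N 1 m * log (t * m : ℕ) ^ 2 ≤ C * (log t + 1) * L := by
  obtain ⟨C, hC₁, hC⟩ := exists_sum_denseWeight_tail_le
  refine ⟨10 * C, by linarith, fun z t N L F ht hL hF ↦ ?_⟩
  have hlogt : 0 ≤ log t := log_natCast_nonneg t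
  have hmass := sum_denseWeight_le_one z t N one_pos F
  have hlog_sq : ∑ m ∈ F, denseWeight z t N 1 m * log m ^ 2 ≤ 1 + 3 * (C * (log t + 1)) * L := by
    refine sum_mul_sq_le_of_tail_le (by linarith) (fun m _ ↦ denseWeight_nonneg z t N one_pos m)
      (fun m hm ↦ ⟨log_natCast_nonneg m, (hF m hm).2⟩) (by positivity) hmass fun k hk ↦ ?_
    have h := hC z t N (exp k) {m ∈ F | (k : ℝ) ≤ log m} ht
      (one_lt_exp_iff.2 (by positivity)) fun m hm ↦ by
        rw [mem_filter] at hm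
        rw [← le_log_iff_exp_le (by exact_mod_cast Nat.pos_of_ne_zero (hF m hm.1).1)]
        exact hm.2
    rwa [log_exp] at h
  have hsplit : ∑ m ∈ F, denseWeight z t N 1 m * log (t * m : ℕ) ^ 2 ≤
      2 * log t ^ 2 * ∑ m ∈ F, denseWeight z t N 1 m +
        2 * ∑ m ∈ F, denseWeight z t N 1 m * log m ^ 2 := by
    rw [mul_sum, mul_sum, ← sum_add_distrib]
    refine sum_le_sum fun m hm ↦ ?_
    rw [log_natCast_mul ht (hF m hm).1]
    have hweight := denseWeight_nonneg z t N one_pos m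
    nlinarith [mul_nonneg hweight (sq_nonneg (log t - log m))]
  have hone : 1 ≤ (log t + 1) * L := by nlinarith
  have hsq : log t ^ 2 ≤ (log t + 1) * L := by nlinarith
  have hsq_mass : log t ^ 2 * ∑ m ∈ F, denseWeight z t N 1 m ≤ log t ^ 2 :=
    mul_le_of_le_one_right (sq_nonneg _) hmass
  nlinarith [mul_le_mul_of_nonneg_right hC₁ (by linarith : 0 ≤ (log t + 1) * L)]

/-! ### Mertens' product -/

lemma hasSum_smoothNumbers_rpow_neg (hs : 0 < s) (N : ℕ) :
    HasSum (fun m : Nat.smoothNumbers (N + 1) ↦ (m : ℝ) ^ (-s))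
      (eulerProduct (Nat.primesLE N) s)⁻¹ := by
  let f : ℕ →* ℝ :=
    { toFun n := (n : ℝ) ^ (-s)
      map_one' := by simp
      map_mul' a b := by rw [Nat.cast_mul, mul_rpow (by positivity) (by positivity)] }
  have hf {p : ℕ} (hp : p.Prime) : ‖f p‖ < 1 := by
    change ‖(p : ℝ) ^ (-s)‖ < 1
    rw [norm_of_nonneg (rpow_nonneg p.cast_nonneg _)]
    exact rpow_neg_lt_one hp.two_le hs
  rw [eulerProduct, ← prod_inv_distrib]
  exact (EulerProduct.summable_and_hasSum_smoothNumbers_prod_primesBelow_geometric hf (N + 1)).2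

lemma eulerProduct_anti {P Q : Finset ℕ} (hPQ : P ⊆ Q) (hQ : ∀ p ∈ Q, 2 ≤ p) (hs : 0 < s) :
    eulerProduct Q s ≤ eulerProduct P s := by
  refine prod_le_prod_of_subset_of_le_one hPQ (fun p hp ↦ ?_) fun p _ _ ↦ ?_
  · exact sub_nonneg.2 (rpow_neg_lt_one (hQ p hp) hs).le
  · exact sub_le_self _ (by positivity)

lemma exists_tsum_rpow_le : ∃ δ₀ : ℝ, 0 < δ₀ ∧ ∀ δ : ℝ, 0 < δ → δ ≤ δ₀ →
    ∑' n : ℕ, 1 / (n : ℝ) ^ (1 + δ) ≤ 2 / δ := by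
  have h := tendsto_sub_mul_tsum_nat_rpow.eventually_le_const (u := 2) one_lt_two
  rw [eventually_nhdsWithin_iff, Metric.eventually_nhds_iff] at h
  obtain ⟨r, hr, h⟩ := h
  refine ⟨r / 2, by positivity, fun δ hδ hδr ↦ ?_⟩
  have hδ' := @h (1 + δ) (by rw [Real.dist_eq, add_sub_cancel_left, abs_of_pos hδ]; linarith)
    (by simpa using hδ)
  rwa [add_sub_cancel_left, ← le_div_iff₀' hδ] at hδ'

lemma exists_div_log_le_eulerProduct : ∃ c : ℝ, 0 < c ∧ ∀ n P, 2 ≤ n → P ⊆ Nat.primesLE n →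
    c / log n ≤ eulerProduct P 1 := by
  obtain ⟨C, hC₀, hC⟩ := exists_sum_one_sub_rpow_neg_div_le
  obtain ⟨δ₀, hδ₀, hzeta⟩ := exists_tsum_rpow_le
  have hlog2 : 0 < log 2 := log_pos one_lt_two
  set κ := δ₀ * log 2
  have : 0 < κ := by positivity
  refine ⟨κ * exp (-(κ + δ₀ * C)) / 2, by positivity, fun n P hn hP ↦ ?_⟩
  have hn2 : log 2 ≤ log n := log_le_log two_pos (by exact_mod_cast hn)
  have hlogn : 0 < log n := hlog2.trans_le hn2
  set δ := κ / log n
  have hδ : 0 < δ := by positivity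
  have hδδ₀ : δ ≤ δ₀ := (div_le_iff₀ hlogn).2 (mul_le_mul_of_nonneg_left hn2 hδ₀.le)
  have hprimes : ∀ p ∈ Nat.primesLE n, 2 ≤ p := fun _ ↦ Nat.two_le_of_mem_primesLE
  have hinv : (eulerProduct (Nat.primesLE n) (1 + δ))⁻¹ ≤ 2 / δ := by
    have hsum := hasSum_smoothNumbers_rpow_neg (add_pos one_pos hδ) n
    have hsummable : Summable fun m : ℕ ↦ (m : ℝ) ^ (-(1 + δ)) :=
      summable_nat_rpow.2 (by linarith)
    rw [← hsum.tsum_eq]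
    refine (hsummable.tsum_subtype_le _ _ fun m ↦ by positivity).trans ?_
    simpa only [rpow_neg (Nat.cast_nonneg _), one_div] using hzeta δ hδ hδδ₀
  have hpos := eulerProduct_pos hprimes (add_pos one_pos hδ)
  have hexp : ∑ p ∈ Nat.primesLE n, (1 - (p : ℝ) ^ (-δ)) / ((p : ℝ) - 1) ≤ κ + δ₀ * C := by
    refine (hC n _ δ subset_rfl hδ).1.trans ?_
    rw [mul_add, div_mul_cancel₀ _ hlogn.ne']
    gcongr
  calc _ = δ / 2 * exp (-(κ + δ₀ * C)) := by ring
    _ ≤ eulerProduct (Nat.primesLE n) (1 + δ) *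
        exp (-∑ p ∈ Nat.primesLE n, (1 - (p : ℝ) ^ (-δ)) / ((p : ℝ) - 1)) := by
      gcongr
      rwa [inv_le_comm₀ hpos (by positivity), inv_div] at hinv
    _ ≤ eulerProduct (Nat.primesLE n) 1 := eulerProduct_one_add_le hprimes hδ
    _ ≤ eulerProduct P 1 := eulerProduct_anti hP hprimes one_pos

lemma eulerProduct_primesLE_mul_log_le (y : ℕ) :
    eulerProduct (Nat.primesLE y) 1 * log (y + 1) ≤ 1 := by
  have hpos : 0 < eulerProduct (Nat.primesLE y) 1 :=
    eulerProduct_pos (fun _ ↦ Nat.two_le_of_mem_primesLE) one_pos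
  have hsum := hasSum_smoothNumbers_rpow_neg one_pos y
  have hmem : ∀ m ∈ Icc 1 y, m ∈ Nat.smoothNumbers (y + 1) := fun m hm ↦
    Nat.mem_smoothNumbers_of_lt (mem_Icc.1 hm).1 (Nat.lt_succ_of_le (mem_Icc.1 hm).2)
  have hharmonic : log (y + 1) ≤ ∑ m ∈ Icc 1 y, (m : ℝ) ^ (-1 : ℝ) := by
    simpa [harmonic_eq_sum_Icc, rpow_neg_one] using log_add_one_le_harmonic y
  rw [← le_div_iff₀' hpos, one_div]
  refine hharmonic.trans ?_
  rw [← hsum.tsum_eq, ← sum_subtype_of_mem _ hmem]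
  exact hsum.summable.sum_le_tsum _ fun m _ ↦ by positivity

lemma exists_eulerProduct_filter_lt_le (z : ℕ) : ∃ C : ℝ, 0 < C ∧ ∀ y : ℕ, 1 ≤ y →
    eulerProduct {p ∈ Nat.primesLE y | z < p} 1 ≤ C / log (y + 1) := by
  have hprimes {n p : ℕ} (hp : p ∈ Nat.primesLE n) : 2 ≤ p := Nat.two_le_of_mem_primesLE hp
  have hz : 0 < eulerProduct (Nat.primesLE z) 1 := eulerProduct_pos (fun _ ↦ hprimes) one_pos
  refine ⟨(eulerProduct (Nat.primesLE z) 1)⁻¹, inv_pos.2 hz, fun y hy ↦ ?_⟩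
  have hlog : 0 < log (y + 1 : ℝ) := log_pos (by exact_mod_cast Nat.lt_succ_of_le hy)
  have hsmall : eulerProduct (Nat.primesLE z) 1 ≤
      eulerProduct {p ∈ Nat.primesLE y | ¬ z < p} 1 := by
    refine eulerProduct_anti (fun p hp ↦ ?_) (fun _ ↦ hprimes) one_pos
    rw [mem_filter, Nat.mem_primesLE] at hp
    exact Nat.mem_primesLE.2 ⟨not_lt.1 hp.2, hp.1.2⟩
  have hsplit : eulerProduct {p ∈ Nat.primesLE y | z < p} 1 *
      eulerProduct {p ∈ Nat.primesLE y | ¬ z < p} 1 = eulerProduct (Nat.primesLE y) 1 :=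
    prod_filter_mul_prod_filter_not _ _ _
  have hpos : 0 < eulerProduct {p ∈ Nat.primesLE y | z < p} 1 :=
    eulerProduct_pos (fun _ hp ↦ hprimes (mem_filter.1 hp).1) one_pos
  rw [le_div_iff₀ hlog, ← one_div, le_div_iff₀ hz]
  calc _ = eulerProduct {p ∈ Nat.primesLE y | z < p} 1 * eulerProduct (Nat.primesLE z) 1 *
        log (y + 1) := by ring
    _ ≤ eulerProduct (Nat.primesLE y) 1 * log (y + 1) := by rw [← hsplit]; gcongr
    _ ≤ 1 := eulerProduct_primesLE_mul_log_le y

/-! ### Smooth dense integers -/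

lemma sum_sub_le_of_hasSum {f g : ℕ → ℝ} {a : ℝ} (hf : HasSum f a) (hg : HasSum g a)
    {F B : Finset ℕ} (hFB : Disjoint F B) (hle : ∀ m ∉ B, f m ≤ g m) :
    ∑ m ∈ F, (g m - f m) ≤ ∑ m ∈ B, (f m - g m) := by
  have hunion : ∑ m ∈ F ∪ B, (g m - f m) ≤ a - a :=
    sum_le_hasSum _ (fun m hm ↦ sub_nonneg.2 (hle m fun hB ↦ hm (mem_union_right F hB)))
      (hg.sub hf)
  have hneg : ∑ m ∈ B, (f m - g m) = -∑ m ∈ B, (g m - f m) := by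
    simp only [← sum_neg_distrib, neg_sub]
  rw [sum_union hFB] at hunion
  linarith

lemma exists_finset_log_lt (L : ℝ) : ∃ B : Finset ℕ, ∀ m, m ∈ B ↔ m ≠ 0 ∧ log m < L := by
  refine ⟨{m ∈ range ⌈exp L⌉₊ | m ≠ 0}, fun m ↦ ?_⟩
  rw [mem_filter, mem_range, Nat.lt_ceil, and_comm]
  exact and_congr_right fun hm ↦ (log_lt_iff_lt_exp (by positivity)).symm

lemma mul_log_le_one_of_mem_sievePrimes {p y : ℕ} (hp : p ∈ sievePrimes z N y) (hδ : 0 ≤ δ)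
    (hδN : δ * log N = 1) : δ * log p ≤ 1 := by
  obtain ⟨⟨-, hprime⟩, -, hpN⟩ := mem_sievePrimes.1 hp
  rw [← hδN]
  have := hprime.pos
  gcongr

lemma exists_exp_mul_denseWeight_le : ∃ C : ℝ, 0 ≤ C ∧ ∀ (z t N m : ℕ) (δ : ℝ), 0 < δ →
    δ ≤ 1 / 2 → δ * log N = 1 →
    exp (δ * log m) * denseWeight z t N 1 m ≤ exp C * denseWeight z t N (1 - δ) m := by
  obtain ⟨C, hC₀, hC⟩ := exists_sum_rpow_sub_one_div_le
  refine ⟨C + 2, by linarith, fun z t N m δ hδ hδ2 hδN ↦ ?_⟩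
  have hPN : sievePrimes z N (t * m) ⊆ Nat.primesLE N := fun p hp ↦ by
    obtain ⟨⟨-, hprime⟩, -, hpN⟩ := mem_sievePrimes.1 hp
    exact Nat.mem_primesLE.2 ⟨hpN.le, hprime⟩
  have hbound := le_denseWeight_one_sub (t := t) hδ.le hδ2
    (hC N _ δ hPN hδ.le fun p hp ↦ mul_log_le_one_of_mem_sievePrimes hp hδ.le hδN).1
  rw [exp_sub, mul_div_assoc', div_le_iff₀ (exp_pos _), mul_comm, mul_comm _ (exp _)] at hbound
  refine hbound.trans ?_
  have hw : 0 ≤ denseWeight z t N (1 - δ) m := denseWeight_nonneg z t N (by linarith) m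
  gcongr
  nlinarith

lemma exists_denseWeight_sub_le : ∃ C : ℝ, 1 ≤ C ∧ ∀ (z t N m : ℕ) (δ : ℝ), 1 ≤ t → m ≠ 0 →
    0 < δ → δ ≤ 1 / 2 → δ * log N = 1 →
    denseWeight z t N 1 m - denseWeight z t N (1 - δ) m ≤
      denseWeight z t N 1 m * (C * δ * (log t + 1)) +
        denseWeight z t N 1 m * log (t * m : ℕ) ^ 2 * (C * δ ^ 2) := by
  obtain ⟨C, hC₀, hC⟩ := exists_sum_rpow_sub_one_div_le
  refine ⟨2 * C + 2, by linarith, fun z t N m δ ht hm hδ hδ2 hδN ↦ ?_⟩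
  have hlt : 0 ≤ log t := log_natCast_nonneg t
  have hw := denseWeight_nonneg z t N one_pos m
  have hbound := le_denseWeight_one_sub (t := t) hδ.le hδ2 (hC (t * m) _ δ
    (sievePrimes_subset z N _) hδ.le fun p hp ↦ mul_log_le_one_of_mem_sievePrimes hp hδ.le hδN).2
  have hlog := log_natCast_mul ht hm
  set l := log (t * m : ℕ)
  have hlin : δ * l ≤ 1 + δ * l ^ 2 := by nlinarith [sq_nonneg (l - 1)]
  have hexponent : -(δ * log m - (δ + δ ^ 2 * l) * (l + C)) ≤
      (2 * C + 2) * δ * (log t + 1) + l ^ 2 * ((2 * C + 2) * δ ^ 2) := by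
    rw [eq_sub_of_add_eq' hlog.symm]
    nlinarith [mul_le_mul_of_nonneg_left hlin (mul_nonneg hC₀ hδ.le),
      mul_nonneg hC₀ (mul_nonneg hδ.le hlt), mul_nonneg hC₀ (sq_nonneg (δ * l)),
      mul_nonneg hδ.le hlt, sq_nonneg (δ * l)]
  have hexp := mul_le_mul_of_nonneg_left
    (add_one_le_exp (δ * log m - (δ + δ ^ 2 * l) * (l + C))) hw
  nlinarith [mul_le_mul_of_nonneg_left hexponent hw]

lemma exists_sum_denseWeight_sub_le : ∃ C : ℝ, 1 ≤ C ∧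
    ∀ (z t N : ℕ) (δ L : ℝ) (B : Finset ℕ), 1 ≤ t → 0 < δ → δ ≤ 1 / 2 → δ * log N = 1 →
    log t + 1 ≤ L → (∀ m ∈ B, m ≠ 0 ∧ log m ≤ L) →
    ∑ m ∈ B, (denseWeight z t N 1 m - denseWeight z t N (1 - δ) m) ≤
      C * δ * (log t + 1) * (1 + δ * L) := by
  obtain ⟨C₁, hC₁, hle⟩ := exists_denseWeight_sub_le
  obtain ⟨C₂, hC₂, hmoment⟩ := exists_sum_denseWeight_mul_log_sq_le
  refine ⟨C₁ * C₂, one_le_mul_of_one_le_of_one_le hC₁ hC₂,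
    fun z t N δ L B ht hδ hδ2 hδN hL hB ↦ ?_⟩
  have := log_natCast_nonneg t
  calc _ ≤ (∑ m ∈ B, denseWeight z t N 1 m) * (C₁ * δ * (log t + 1)) +
        (∑ m ∈ B, denseWeight z t N 1 m * log (t * m : ℕ) ^ 2) * (C₁ * δ ^ 2) := by
        rw [sum_mul, sum_mul, ← sum_add_distrib]
        exact sum_le_sum fun m hm ↦ hle z t N m δ ht (hB m hm).1 hδ hδ2 hδN
    _ ≤ C₂ * (C₁ * δ * (log t + 1)) + C₂ * (log t + 1) * L * (C₁ * δ ^ 2) := by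
        gcongr
        · exact (sum_denseWeight_le_one z t N one_pos B).trans hC₂
        · exact hmoment z t N L B ht hL hB
    _ = _ := by ring

lemma exp_mul_le_two_mul_exp_mul_sub {u v c x : ℝ} (hu : 0 ≤ u) (huv : exp x * u ≤ exp c * v)
    (hcx : c + 1 ≤ x) : exp x * u ≤ 2 * exp c * (v - u) := by
  have hexp : 2 * exp c ≤ exp x := by
    refine le_trans ?_ (exp_le_exp.2 hcx)
    rw [exp_add, mul_comm]
    gcongr
    exact le_trans (by norm_num) (add_one_le_exp 1)
  nlinarith [mul_le_mul_of_nonneg_right hexp hu]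

lemma sum_exp_mul_denseWeight_le_mul_sum_sub {c : ℝ} {F B : Finset ℕ} (hδ : δ < 1) (hc : 0 < c)
    (hFB : Disjoint F B) (hgain : ∀ m ∉ B, exp (δ * log m) * denseWeight z t N 1 m ≤
      c * (denseWeight z t N (1 - δ) m - denseWeight z t N 1 m)) :
    ∑ m ∈ F, exp (δ * log m) * denseWeight z t N 1 m ≤
      c * ∑ m ∈ B, (denseWeight z t N 1 m - denseWeight z t N (1 - δ) m) := by
  have hbalance := sum_sub_le_of_hasSum (hasSum_denseWeight z t one_pos N)
    (hasSum_denseWeight z t (sub_pos.2 hδ) N) hFB fun m hm ↦ sub_nonneg.1 <|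
      nonneg_of_mul_nonneg_right (le_trans (mul_nonneg (exp_pos _).le
        (denseWeight_nonneg z t N one_pos m)) (hgain m hm)) hc
  calc _ ≤ c * ∑ m ∈ F, (denseWeight z t N (1 - δ) m - denseWeight z t N 1 m) := by
        rw [mul_sum]
        exact sum_le_sum fun m hm ↦ hgain m (disjoint_left.1 hFB hm)
    _ ≤ _ := mul_le_mul_of_nonneg_left hbalance hc.le

/-- A Rankin-type bound: the weights at `1` and at `1 - δ` have the same total mass, so what the
latter gain on large `m` they lose on small `m`, where the loss is governed by the second
logarithmic moment. -/
lemma exists_sum_exp_mul_denseWeight_le : ∃ A C : ℝ, 1 ≤ A ∧ 1 ≤ C ∧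
    ∀ (z t N : ℕ) (δ : ℝ) (F : Finset ℕ), 1 ≤ t → 0 < δ → δ ≤ 1 / 2 → δ * log N = 1 →
    (∀ m ∈ F, A * log N ≤ log m) →
    ∑ m ∈ F, exp (δ * log m) * denseWeight z t N 1 m ≤ C * δ * (log t + 1) := by
  obtain ⟨C₁, hC₁, hle⟩ := exists_exp_mul_denseWeight_le
  obtain ⟨C₂, hC₂, hloss⟩ := exists_sum_denseWeight_sub_le
  refine ⟨C₁ + 1, 2 * exp C₁ * (C₂ * (C₁ + 2)), by linarith, ?_,
    fun z t N δ F ht hδ hδ2 hδN hF ↦ ?_⟩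
  · nlinarith [one_le_exp hC₁, one_le_mul_of_one_le_of_one_le (one_le_exp hC₁) hC₂]
  have := one_le_exp hC₁
  have := log_natCast_nonneg t
  have : 0 < log N := pos_of_mul_pos_right (hδN ▸ one_pos) hδ.le
  rcases le_or_gt 1 (δ * (log t + 1)) with hbig | hsmall
  · calc _ ≤ ∑ m ∈ F, exp C₁ * denseWeight z t N (1 - δ) m :=
          sum_le_sum fun m _ ↦ hle z t N m δ hδ hδ2 hδN
      _ ≤ exp C₁ * 1 := by
          rw [← mul_sum]
          gcongr
          exact sum_denseWeight_le_one z t N (by linarith) F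
      _ ≤ 2 * exp C₁ * (C₂ * (C₁ + 2)) * (δ * (log t + 1)) := by
          have hC : 1 ≤ C₂ * (C₁ + 2) := one_le_mul_of_one_le_of_one_le hC₂ (by linarith)
          rw [mul_comm 2, mul_assoc, mul_assoc]
          gcongr
          nlinarith
      _ = _ := by ring
  obtain ⟨B, hB⟩ := exists_finset_log_lt ((C₁ + 1) * log N)
  calc _ ≤ 2 * exp C₁ * ∑ m ∈ B, (denseWeight z t N 1 m - denseWeight z t N (1 - δ) m) := by
        refine sum_exp_mul_denseWeight_le_mul_sum_sub (by linarith) (by positivity)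
          (disjoint_left.2 fun m hmF hmB ↦ ((hB m).1 hmB).2.not_ge (hF m hmF)) fun m hm ↦ ?_
        rcases eq_or_ne m 0 with rfl | hm0
        · simp [denseWeight_zero]
        have hlog : (C₁ + 1) * log N ≤ log m := not_lt.1 fun h ↦ hm ((hB m).2 ⟨hm0, h⟩)
        exact exp_mul_le_two_mul_exp_mul_sub (denseWeight_nonneg z t N one_pos m)
          (hle z t N m δ hδ hδ2 hδN) (by nlinarith)
    _ ≤ 2 * exp C₁ * (C₂ * δ * (log t + 1) * (1 + δ * ((C₁ + 1) * log N))) := by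
        gcongr
        exact hloss z t N δ _ B ht hδ hδ2 hδN (by nlinarith)
          fun m hm ↦ ⟨((hB m).1 hm).1, ((hB m).1 hm).2.le⟩
    _ = _ := by linear_combination 2 * exp C₁ * C₂ * (C₁ + 1) * δ * (log t + 1) * hδN

lemma exists_sum_denseWeight_smooth_tail_le : ∃ C : ℝ, 1 ≤ C ∧
    ∀ (z t N : ℕ) (y : ℝ) (F : Finset ℕ), 1 ≤ t → 2 ≤ log N → 1 < y → (∀ m ∈ F, y ≤ m) →
      ∑ m ∈ F, denseWeight z t N 1 m ≤ C * (log t + 1) * log N / log y ^ 2 := by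
  obtain ⟨A, C₁, hA, hC₁, hrankin⟩ := exists_sum_exp_mul_denseWeight_le
  obtain ⟨C₂, hC₂, htail⟩ := exists_sum_denseWeight_tail_le
  refine ⟨2 * C₁ + A * C₂, by nlinarith, fun z t N y F ht hN hy hF ↦ ?_⟩
  have hlogy : 0 < log y := log_pos hy
  have := log_natCast_nonneg t
  rcases le_or_gt (log y) (A * log N) with hle | hlt
  · calc _ ≤ C₂ * (log t + 1) / log y := htail z t N y F ht hy hF
      _ = C₂ * (log t + 1) * log y / log y ^ 2 := by field_simp
      _ ≤ C₂ * (log t + 1) * (A * log N) / log y ^ 2 := by gcongr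
      _ = A * C₂ * (log t + 1) * log N / log y ^ 2 := by ring
      _ ≤ _ := by
        gcongr
        linarith
  have hlogm {m : ℕ} (hm : m ∈ F) : log y ≤ log m := log_le_log (by linarith) (hF m hm)
  have hδN : (log N)⁻¹ * log N = 1 := inv_mul_cancel₀ (by linarith)
  set δ := (log N)⁻¹
  have hδ : 0 < δ := inv_pos.2 (by linarith)
  have hδ2 : δ ≤ 1 / 2 := by nlinarith
  have hS : 0 ≤ ∑ m ∈ F, denseWeight z t N 1 m :=
    sum_nonneg fun m _ ↦ denseWeight_nonneg z t N one_pos m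
  have hexp : (δ * log y) ^ 2 / 2 ≤ exp (δ * log y) := by
    linarith [quadratic_le_exp_of_nonneg (by positivity : 0 ≤ δ * log y),
      (by positivity : 0 ≤ δ * log y)]
  have hmul : (δ * log y) ^ 2 / 2 * ∑ m ∈ F, denseWeight z t N 1 m ≤ C₁ * δ * (log t + 1) := by
    calc _ ≤ exp (δ * log y) * ∑ m ∈ F, denseWeight z t N 1 m := by gcongr
      _ ≤ ∑ m ∈ F, exp (δ * log m) * denseWeight z t N 1 m := by
        rw [mul_sum]
        gcongr with m hm
        · exact denseWeight_nonneg z t N one_pos m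
        · exact hF m hm
      _ ≤ _ := hrankin z t N δ F ht hδ hδ2 hδN fun m hm ↦ hlt.le.trans (hlogm hm)
  calc _ ≤ C₁ * δ * (log t + 1) / ((δ * log y) ^ 2 / 2) := (le_div_iff₀' (by positivity)).2 hmul
    _ = 2 * C₁ * (log t + 1) * log N / log y ^ 2 := by
      rw [eq_inv_of_mul_eq_one_right hδN]
      field_simp
    _ ≤ _ := by
      gcongr
      nlinarith

lemma exists_inv_le_mul_denseWeight : ∃ C : ℝ, 0 < C ∧ ∀ z t N m, 2 ≤ N → IsDense z t m →
    m ∈ Nat.smoothNumbers N → (m : ℝ)⁻¹ ≤ C * log N * denseWeight z t N 1 m := by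
  obtain ⟨c, hc, hprod⟩ := exists_div_log_le_eulerProduct
  refine ⟨c⁻¹, inv_pos.2 hc, fun z t N m hN hm hmN ↦ ?_⟩
  have hlogN : 0 < log N := log_pos (by exact_mod_cast hN)
  have hP : sievePrimes z N (t * m) ⊆ Nat.primesLE N := fun p hp ↦
    Nat.mem_primesLE.2 ⟨(mem_sievePrimes.1 hp).2.2.le, (mem_sievePrimes.1 hp).1.2⟩
  rw [denseWeight_of_isDense hm hmN, rpow_neg_one]
  calc _ = c⁻¹ * log N * ((m : ℝ)⁻¹ * (c / log N)) := by field_simp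
    _ ≤ _ := by
      gcongr
      exact hprod N _ hN hP

lemma exists_sum_inv_isDense_smooth_le : ∃ C : ℝ, 1 ≤ C ∧
    ∀ (z t N : ℕ) (y : ℝ) (F : Finset ℕ), 1 ≤ t → 2 ≤ N → 1 < y →
      (∀ m ∈ F, IsDense z t m ∧ m ∈ Nat.smoothNumbers N ∧ y ≤ m) →
      ∑ m ∈ F, (m : ℝ)⁻¹ ≤ C * (log t + 1) * (log N / log y) ^ 2 := by
  obtain ⟨C₁, hC₁, htail⟩ := exists_sum_denseWeight_smooth_tail_le
  obtain ⟨C₂, hC₂, hinv⟩ := exists_inv_le_mul_denseWeight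
  refine ⟨max 1 (9 * (C₁ * C₂)), le_max_left _ _, fun z t N y F ht hN hy hF ↦ ?_⟩
  have := log_natCast_nonneg t
  have hlog8 : log ((8 : ℕ) : ℝ) = 3 * log 2 := by
    rw [show ((8 : ℕ) : ℝ) = 2 ^ 3 by norm_num, log_pow, Nat.cast_ofNat]
  have hlogN : log 2 ≤ log N := log_le_log two_pos (by exact_mod_cast hN)
  set K := max N 8
  have hK : 2 ≤ log K :=
    calc (2 : ℝ) ≤ 3 * log 2 := by linarith [log_two_gt_d9]
      _ = log ((8 : ℕ) : ℝ) := hlog8.symm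
      _ ≤ log K := log_le_log (by norm_num) (Nat.cast_le.2 (le_max_right N 8))
  have hKN : log K ≤ 3 * log N := by
    rcases max_choice N 8 with h | h
    · linarith [log_two_gt_d9, congrArg (fun n : ℕ ↦ log n) h]
    · linarith [congrArg (fun n : ℕ ↦ log n) h]
  calc _ ≤ ∑ m ∈ F, C₂ * log K * denseWeight z t K 1 m :=
        sum_le_sum fun m hm ↦ hinv z t K m (hN.trans (le_max_left _ _)) (hF m hm).1
          (Nat.smoothNumbers_mono (le_max_left _ _) (hF m hm).2.1)
    _ ≤ C₂ * log K * (C₁ * (log t + 1) * log K / log y ^ 2) := by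
        rw [← mul_sum]
        gcongr
        exact htail z t K y F ht hK hy fun m hm ↦ (hF m hm).2.2
    _ = C₁ * C₂ * ((log t + 1) * (log K / log y) ^ 2) := by ring
    _ ≤ C₁ * C₂ * ((log t + 1) * (3 * log N / log y) ^ 2) := by
        have := log_pos hy
        gcongr
    _ = 9 * (C₁ * C₂) * ((log t + 1) * (log N / log y) ^ 2) := by ring
    _ ≤ max 1 (9 * (C₁ * C₂)) * ((log t + 1) * (log N / log y) ^ 2) := by
        gcongr
        exact le_max_right _ _
    _ = _ := by ring

/-! ### Counting dense integers from above -/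

lemma log_le_two_mul_sqrt {x : ℝ} (hx : 0 ≤ x) : log x ≤ 2 * √x := by
  have := log_le_self (sqrt_nonneg x)
  rw [log_sqrt hx] at this
  linarith

lemma primeCounting_le {k : ℕ} (hk : 2 ≤ k) : (Nat.primeCounting k : ℝ) ≤ 5 * k / log k := by
  have hlog : 0 < log k := log_pos (by exact_mod_cast hk)
  have hpi := Chebyshev.pi_le_log4_mul_div (x := k) (by exact_mod_cast hk)
  rw [Nat.floor_natCast, log_sqrt k.cast_nonneg, div_div_eq_mul_div] at hpi
  have hlog4 : log 4 = 2 * log 2 := by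
    rw [show (4 : ℝ) = 2 ^ 2 by norm_num, log_pow, Nat.cast_ofNat]
  have hsqrt : √k ≤ 2 * k / log k := by
    rw [le_div_iff₀ hlog]
    nlinarith [log_le_two_mul_sqrt k.cast_nonneg, sqrt_nonneg (k : ℝ), sq_sqrt k.cast_nonneg]
  calc (Nat.primeCounting k : ℝ) ≤ log 4 * k * 2 / log k + 2 * k / log k := by linarith
    _ = (4 * log 2 + 2) * k / log k := by rw [hlog4]; ring
    _ ≤ 5 * k / log k := by
      gcongr
      linarith [log_two_lt_d9]

lemma card_sq_le_mul_log_le (X : ℕ) : #{n ∈ Icc 1 X | n * n ≤ X} * log X ≤ 2 * X := by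
  have hcard : #{n ∈ Icc 1 X | n * n ≤ X} ≤ Nat.sqrt X := by
    refine (card_le_card (t := Icc 1 (Nat.sqrt X)) fun n hn ↦ ?_).trans_eq (by simp)
    rw [mem_filter, mem_Icc] at hn
    exact mem_Icc.2 ⟨hn.1.1, Nat.le_sqrt.2 hn.2⟩
  calc #{n ∈ Icc 1 X | n * n ≤ X} * log X ≤ √X * (2 * √X) := by
        gcongr
        · exact (Nat.cast_le.2 hcard).trans nat_sqrt_le_real_sqrt
        · exact log_le_two_mul_sqrt X.cast_nonneg
    _ = 2 * X := by rw [mul_left_comm, mul_self_sqrt X.cast_nonneg]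

lemma two_pow_two_pow_log_log_le {k : ℕ} (hk : 2 ≤ k) : 2 ^ 2 ^ Nat.log 2 (Nat.log 2 k) ≤ k := by
  have hlog : Nat.log 2 k ≠ 0 := (Nat.log_pos one_lt_two hk).ne'
  exact (Nat.pow_le_pow_right two_pos (Nat.pow_log_le_self 2 hlog)).trans
    (Nat.pow_log_le_self 2 (by omega))

lemma two_pow_log_log_mul_log_two_le {k : ℕ} (hk : 2 ≤ k) :
    2 ^ Nat.log 2 (Nat.log 2 k) * log 2 ≤ log k := by
  have hle : ((2 ^ 2 ^ Nat.log 2 (Nat.log 2 k) : ℕ) : ℝ) ≤ k :=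
    Nat.cast_le.2 (two_pow_two_pow_log_log_le hk)
  simpa using log_le_log (by positivity) hle

lemma lt_two_pow_two_pow_log_log_succ (k : ℕ) : k < 2 ^ 2 ^ (Nat.log 2 (Nat.log 2 k) + 1) :=
  Nat.lt_pow_of_log_lt one_lt_two (Nat.lt_pow_succ_log_self one_lt_two _)

lemma primeCounting_div_le {X m : ℕ} (h : 2 ≤ X / m) :
    (Nat.primeCounting (X / m) : ℝ) ≤
      5 * X / (2 ^ Nat.log 2 (Nat.log 2 (X / m)) * log 2) * (m : ℝ)⁻¹ := by
  have := log_pos one_lt_two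
  calc _ ≤ 5 * ((X / m : ℕ) : ℝ) / log (X / m : ℕ) := primeCounting_le h
    _ ≤ 5 * (X / m) / (2 ^ Nat.log 2 (Nat.log 2 (X / m)) * log 2) := by
      gcongr
      · exact Nat.cast_div_le
      · exact two_pow_log_log_mul_log_two_le h
    _ = _ := by ring

lemma sum_primeCounting_div_le {X : ℕ} {M : Finset ℕ} {K : ℝ} (hX : 2 ≤ X)
    (hM : ∀ m ∈ M, 2 ≤ X / m)
    (hK : ∀ N : ℕ, 2 ≤ N → ∑ m ∈ M with X / m < N, (m : ℝ)⁻¹ ≤ K * log N ^ 2) :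
    ∑ m ∈ M, (Nat.primeCounting (X / m) : ℝ) ≤ 40 * K * X * log X := by
  let block (m : ℕ) : ℕ := Nat.log 2 (Nat.log 2 (X / m))
  have := log_pos one_lt_two
  have hblock (j : ℕ) : ∑ m ∈ M with block m = j, (Nat.primeCounting (X / m) : ℝ) ≤
      20 * K * X * log 2 * 2 ^ j := by
    calc _ ≤ ∑ m ∈ M with block m = j, 5 * X / (2 ^ j * log 2) * (m : ℝ)⁻¹ :=
          sum_le_sum fun m hm ↦
            (mem_filter.1 hm).2 ▸ primeCounting_div_le (hM m (mem_filter.1 hm).1)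
      _ ≤ 5 * X / (2 ^ j * log 2) * ∑ m ∈ M with X / m < 2 ^ 2 ^ (j + 1), (m : ℝ)⁻¹ := by
          rw [← mul_sum]
          gcongr with m
          intro h
          exact h ▸ lt_two_pow_two_pow_log_log_succ (X / m)
      _ ≤ 5 * X / (2 ^ j * log 2) * (K * (2 ^ (j + 1) * log 2) ^ 2) := by
          gcongr
          exact (hK (2 ^ 2 ^ (j + 1)) (Nat.le_self_pow (by positivity) 2)).trans_eq (by
            rw [Nat.cast_pow, log_pow, Nat.cast_pow, Nat.cast_ofNat])
      _ = 20 * K * X * log 2 * 2 ^ j := by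
          rw [pow_succ]
          field_simp
          ring
  have hK₀ : 0 ≤ K := nonneg_of_mul_nonneg_left
    ((sum_nonneg fun m _ ↦ by positivity).trans (hK 2 le_rfl)) (by positivity)
  set J := Nat.log 2 (Nat.log 2 X)
  have hmaps : ∀ m ∈ M, block m ∈ range (J + 1) := fun m _ ↦ mem_range_succ_iff.2
    (Nat.log_mono_right (Nat.log_mono_right (Nat.div_le_self _ _)))
  have hgeom : ∑ j ∈ range (J + 1), (2 : ℝ) ^ j ≤ 2 * 2 ^ J := by
    rw [geom_sum_eq (by norm_num), pow_succ]
    linarith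
  rw [← sum_fiberwise_of_maps_to hmaps]
  calc _ ≤ 20 * K * X * log 2 * ∑ j ∈ range (J + 1), (2 : ℝ) ^ j := by
        rw [mul_sum]
        exact sum_le_sum fun j _ ↦ hblock j
    _ ≤ 20 * K * X * log 2 * (2 * 2 ^ J) := by gcongr
    _ = 40 * K * X * (2 ^ J * log 2) := by ring
    _ ≤ 40 * K * X * log X := by
        gcongr
        exact two_pow_log_log_mul_log_two_le hX

open Classical in
lemma card_isDense_le_sum_primeCounting (z t X : ℕ) :
    #{n ∈ Icc 1 X | IsDense z t n ∧ X < n * n} ≤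
      ∑ m ∈ Icc 1 X with (IsDense z t m ∧ m ∈ Nat.smoothNumbers (X / m + 1)) ∧
        2 ≤ X / m ∧ X < (t * m ^ 2) ^ 2, Nat.primeCounting (X / m) := by
  simp only [← Nat.primesLE_card_eq_primeCounting]
  refine (card_le_card fun n hn ↦ ?_).trans (card_biUnion_le.trans
    (sum_le_sum fun m _ ↦ card_image_le (f := (m * ·))))
  rw [mem_filter, mem_Icc] at hn
  obtain ⟨⟨-, hnX⟩, hdense, hXn⟩ := hn
  have hn1 : n ≠ 1 := by
    rintro rfl
    omega
  obtain ⟨m, p, rfl, hp, hm, hsmooth, hpt⟩ := hdense.exists_eq_mul_prime hn1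
  have hm0 : 0 < m := Nat.pos_of_ne_zero hm.1
  have hpX : p ≤ X / m := (Nat.le_div_iff_mul_le hm0).2 (by rwa [mul_comm])
  refine mem_biUnion.2 ⟨m, mem_filter.2 ⟨mem_Icc.2 ⟨hm0, ?_⟩, ⟨hm, ?_⟩, hp.two_le.trans hpX, ?_⟩,
    mem_image_of_mem _ (Nat.mem_primesLE.2 ⟨hpX, hp⟩)⟩
  · exact (Nat.le_mul_of_pos_right m hp.pos).trans hnX
  · exact Nat.smoothNumbers_mono (by omega) hsmooth
  · refine hXn.trans_le ?_
    rw [← sq]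
    refine Nat.pow_le_pow_left ?_ 2
    calc m * p ≤ m * (t * m) := by gcongr
      _ = t * m ^ 2 := by ring

open Classical in
lemma card_isDense_le_card_sq_add_sum (z t X : ℕ) :
    (#{n ∈ Icc 1 X | IsDense z t n} : ℝ) ≤ #{n ∈ Icc 1 X | n * n ≤ X} +
      ∑ m ∈ Icc 1 X with (IsDense z t m ∧ m ∈ Nat.smoothNumbers (X / m + 1)) ∧
        2 ≤ X / m ∧ X < (t * m ^ 2) ^ 2, (Nat.primeCounting (X / m) : ℝ) := by
  norm_cast
  refine ((card_le_card fun n hn ↦ ?_).trans (card_union_le _ _)).trans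
    (add_le_add_right (card_isDense_le_sum_primeCounting z t X) _)
  simp only [mem_union, mem_filter] at hn ⊢
  rcases le_or_gt (n * n) X with h | h
  · exact .inl ⟨hn.1, h⟩
  · exact .inr ⟨hn.1, hn.2, h⟩

lemma exp_log_div_eight_le {X : ℕ} (hX : 1 ≤ X) (ht : 8 * log t < log X)
    (hXm : X < (t * m ^ 2) ^ 2) : exp (log X / 8) ≤ m := by
  have hm : (0 : ℝ) < m := by
    rcases Nat.eq_zero_or_pos m with rfl | hm
    · simp at hXm
    · exact_mod_cast hm
  have ht₀ : (0 : ℝ) < t := by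
    rcases Nat.eq_zero_or_pos t with rfl | ht₀
    · simp at hXm
    · exact_mod_cast ht₀
  have : (0 : ℝ) < X := by exact_mod_cast hX
  have hX' : (X : ℝ) ≤ (t * m ^ 2) ^ 2 := by exact_mod_cast hXm.le
  have hlog := log_le_log (by positivity) hX'
  rw [log_pow, log_mul (by positivity) (by positivity), log_pow] at hlog
  rw [← le_log_iff_exp_le hm]
  push_cast at hlog
  linarith [log_natCast_nonneg X]

open Classical in
lemma exists_card_isDense_le : ∃ C : ℝ, 1 ≤ C ∧ ∀ z t X : ℕ, 1 ≤ t → 2 ≤ X →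
    #{n ∈ Icc 1 X | IsDense z t n} ≤ C * X * (log t + 1) / log X := by
  obtain ⟨C, hC, hsum⟩ := exists_sum_inv_isDense_smooth_le
  refine ⟨10 + 2560 * C, by linarith, fun z t X ht hX ↦ ?_⟩
  have hlogX : 0 < log X := log_pos (by exact_mod_cast hX)
  have : 0 ≤ log t := log_natCast_nonneg t
  rw [le_div_iff₀ hlogX]
  rcases le_or_gt (log X) (8 * log t) with hle | hlt
  · have hcard : #{n ∈ Icc 1 X | IsDense z t n} ≤ X :=
      (card_filter_le _ _).trans_eq (by simp)
    calc _ ≤ X * (8 * (log t + 1)) := by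
          gcongr
          linarith
      _ ≤ X * ((10 + 2560 * C) * (log t + 1)) := by
          gcongr
          linarith
      _ = _ := by ring
  set M := {m ∈ Icc 1 X | (IsDense z t m ∧ m ∈ Nat.smoothNumbers (X / m + 1)) ∧
    2 ≤ X / m ∧ X < (t * m ^ 2) ^ 2}
  have hprimes : ∑ m ∈ M, (Nat.primeCounting (X / m) : ℝ) ≤
      40 * (C * (log t + 1) / (log X / 8) ^ 2) * X * log X := by
    refine sum_primeCounting_div_le hX (fun m hm ↦ (mem_filter.1 hm).2.2.1) fun N hN ↦ ?_
    have hy : 1 < exp (log X / 8) := one_lt_exp_iff.2 (by positivity)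
    refine (hsum z t N _ _ ht hN hy fun m hm ↦ ?_).trans_eq (by rw [log_exp]; ring)
    obtain ⟨hmM, hmN⟩ := mem_filter.1 hm
    obtain ⟨-, ⟨hdense, hsmooth⟩, -, hXm⟩ := mem_filter.1 hmM
    exact ⟨hdense, Nat.smoothNumbers_mono hmN hsmooth, exp_log_div_eight_le (by omega) hlt hXm⟩
  calc _ ≤ (#{n ∈ Icc 1 X | n * n ≤ X} + ∑ m ∈ M, (Nat.primeCounting (X / m) : ℝ)) * log X := by
        gcongr
        exact card_isDense_le_card_sq_add_sum z t X
    _ ≤ 2 * X + 40 * (C * (log t + 1) / (log X / 8) ^ 2) * X * log X * log X := by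
        rw [add_mul]
        exact add_le_add (card_sq_le_mul_log_le X) (by gcongr)
    _ = 2 * X + 2560 * C * X * (log t + 1) := by
        field_simp
        ring
    _ ≤ (10 + 2560 * C) * X * (log t + 1) := by
        have hX₀ : (0 : ℝ) ≤ X * log t := by positivity
        nlinarith [X.cast_nonneg (α := ℝ)]

/-! ### The Schinzel–Szekeres function -/

lemma foldr_max_le_iff {l : List ℕ} {a b : ℕ} : l.foldr max a ≤ b ↔ a ≤ b ∧ ∀ c ∈ l, c ≤ b := by
  induction l with
  | nil => simp
  | cons c l ih => simp [ih, and_left_comm]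

lemma filter_lt_eq_take_idxOf {l : List ℕ} {p : ℕ} (hl : l.Pairwise (· ≤ ·)) (hp : p ∈ l) :
    l.filter (· < p) = l.take (l.idxOf p) := by
  induction l with
  | nil => simp at hp
  | cons a l ih =>
    rw [List.pairwise_cons] at hl
    by_cases hap : a = p
    · subst hap
      simpa using hl.1
    · have hpl : p ∈ l := (List.mem_cons.1 hp).resolve_left (Ne.symm hap)
      have hlt : a < p := (hl.1 p hpl).lt_of_ne hap
      simp [List.idxOf_cons_ne _ hap, hlt, ih hl.2 hpl]

lemma smoothPart_eq_prod_take {p : ℕ} (hp : p ∈ n.primeFactorsList) :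
    smoothPart n p = (n.primeFactorsList.take (n.primeFactorsList.idxOf p)).prod := by
  rw [smoothPart, filter_lt_eq_take_idxOf (Nat.primeFactorsList_sorted n).pairwise hp]

lemma SS_le_iff {B : ℕ} : SS n ≤ B ↔
    1 ≤ B ∧ ∀ j (h : j < n.primeFactorsList.length),
      n.primeFactorsList[j] * (n.primeFactorsList.drop j).prod ≤ B := by
  simp only [SS, foldr_max_le_iff, List.forall_mem_map, List.mem_range]
  refine and_congr_right' (forall₂_congr fun j hj ↦ ?_)
  rw [List.drop_eq_getElem_cons hj, List.headI_cons]

lemma mul_le_SS_mul_smoothPart {p : ℕ} (hn : n ≠ 0) (hp : p.Prime) (hpn : p ∣ n) :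
    p * n ≤ SS n * smoothPart n p := by
  have hmem : p ∈ n.primeFactorsList := (Nat.mem_primeFactorsList hn).2 ⟨hp, hpn⟩
  have hSS := (SS_le_iff.1 (le_refl (SS n))).2 _ (List.idxOf_lt_length_of_mem hmem)
  rw [List.getElem_idxOf] at hSS
  calc p * n = p * (n.primeFactorsList.drop (n.primeFactorsList.idxOf p)).prod *
        smoothPart n p := by
        rw [smoothPart_eq_prod_take hmem, mul_assoc, mul_comm (List.prod _),
          List.prod_take_mul_prod_drop, Nat.prod_primeFactorsList hn]
    _ ≤ SS n * smoothPart n p := by gcongr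

lemma IsDense.SS_le (h : IsDense z t n) (ht : 1 ≤ t) : SS n ≤ t * n := by
  refine SS_le_iff.2 ⟨Nat.mul_pos ht (Nat.pos_of_ne_zero h.1), fun j hj ↦ ?_⟩
  set l := n.primeFactorsList
  have hmem : l[j] ∈ l := List.getElem_mem hj
  have hidx : l.idxOf l[j] ≤ j := by
    by_contra! hlt
    simpa using List.not_of_lt_findIdx hlt
  have hsmooth : smoothPart n l[j] ∣ (l.take j).prod := by
    rw [smoothPart_eq_prod_take hmem]
    exact (List.take_prefix_take_left hidx).sublist.prod_dvd_prod
  have hpos : 0 < (l.take j).prod := List.prod_pos fun q hq ↦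
    (Nat.prime_of_mem_primeFactorsList (List.mem_of_mem_take hq)).pos
  obtain ⟨hp, hpn⟩ := (Nat.mem_primeFactorsList h.1).1 hmem
  calc l[j] * (l.drop j).prod ≤ t * (l.take j).prod * (l.drop j).prod :=
        Nat.mul_le_mul_right _ ((h.2 _ hp hpn).2.trans
          (Nat.mul_le_mul_left _ (Nat.le_of_dvd hpos hsmooth)))
    _ = t * n := by rw [mul_assoc, List.prod_take_mul_prod_drop, Nat.prod_primeFactorsList h.1]

lemma isDense_of_SS_le (hn : n ≠ 0) (h : SS n ≤ t * n) : IsDense 0 t n := by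
  refine ⟨hn, fun p hp hpn ↦ ⟨hp.pos, ?_⟩⟩
  refine Nat.le_of_mul_le_mul_right ?_ (Nat.pos_of_ne_zero hn)
  calc p * n ≤ SS n * smoothPart n p := mul_le_SS_mul_smoothPart hn hp hpn
    _ ≤ t * n * smoothPart n p := by gcongr
    _ = t * smoothPart n p * n := by ring

/-! ### The upper bound -/

lemma Axyzt_le_card {x y z t : ℝ} {s : Finset ℕ}
    (h : ∀ n : ℕ, 1 ≤ n → (n : ℝ) ≤ x → (SS n : ℝ) ≤ x * t → n ∈ s) : Axyzt x y z t ≤ #s := by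
  rw [Axyzt, ← Set.ncard_coe_finset]
  exact Set.ncard_le_ncard (fun n ⟨h₁, hx, _, _, hSS⟩ ↦ h n h₁ hx hSS) (finite_toSet s)

lemma Axyzt_le_self {x y z t : ℝ} (hx : 0 ≤ x) : Axyzt x y z t ≤ x := by
  have hcard : Axyzt x y z t ≤ #(Icc 1 ⌊x⌋₊) :=
    Axyzt_le_card fun n hn hnx _ ↦ mem_Icc.2 ⟨hn, Nat.le_floor hnx⟩
  rw [Nat.card_Icc, Nat.add_sub_cancel] at hcard
  exact (Nat.cast_le.2 hcard).trans (Nat.floor_le hx)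

open Classical in
lemma Axyzt_le_two_pow_add_sum {x y z t : ℝ} {I : ℕ} (ht : 0 ≤ t)
    (hI : ⌊x⌋₊ < 2 ^ (2 * I + 2)) :
    Axyzt x y z t ≤ 2 ^ (I + 1) +
      ∑ i ∈ range (I + 1), #{n ∈ Icc 1 (⌊x⌋₊ / 2 ^ i) | IsDense 0 (2 ^ (i + 1) * ⌈t⌉₊) n} := by
  set X := ⌊x⌋₊
  refine (Axyzt_le_card (s := Icc 1 (2 ^ (I + 1)) ∪ (range (I + 1)).biUnion fun i ↦
    {n ∈ Icc 1 (X / 2 ^ i) | IsDense 0 (2 ^ (i + 1) * ⌈t⌉₊) n}) fun n hn hnx hSS ↦ ?_).trans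
    ((card_union_le _ _).trans (add_le_add (by simp) card_biUnion_le))
  have hXn : X / n ≠ 0 := (Nat.div_pos (Nat.le_floor hnx) hn).ne'
  set i := Nat.log 2 (X / n)
  have hle : n * 2 ^ i ≤ X := by
    rw [mul_comm, ← Nat.le_div_iff_mul_le hn]
    exact Nat.pow_log_le_self 2 hXn
  have hlt : X < n * 2 ^ (i + 1) := by
    rw [mul_comm, ← Nat.div_lt_iff_lt_mul hn]
    exact Nat.lt_pow_succ_log_self one_lt_two _
  simp only [mem_union, mem_biUnion, mem_filter, mem_Icc, mem_range]
  rcases le_or_gt i I with hiI | hIi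
  · refine .inr ⟨i, by omega, ⟨hn, (Nat.le_div_iff_mul_le (by positivity)).2 hle⟩,
      isDense_of_SS_le (by omega) ?_⟩
    have hx' : x ≤ (n * 2 ^ (i + 1) : ℕ) := (Nat.lt_of_floor_lt hlt).le
    rw [← Nat.cast_le (α := ℝ)]
    calc (SS n : ℝ) ≤ x * t := hSS
      _ ≤ (n * 2 ^ (i + 1) : ℕ) * ⌈t⌉₊ := by
        gcongr
        exact Nat.le_ceil t
      _ = _ := by
        push_cast
        ring
  · refine .inl ⟨hn, Nat.le_of_mul_le_mul_right (c := 2 ^ (I + 1)) ?_ (by positivity)⟩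
    calc n * 2 ^ (I + 1) ≤ n * 2 ^ i := by
          gcongr
          · exact one_le_two
          · exact hIi
      _ ≤ 2 ^ (2 * I + 2) := hle.trans hI.le
      _ = 2 ^ (I + 1) * 2 ^ (I + 1) := by ring

lemma sum_range_add_two_div_two_pow_le (n : ℕ) :
    ∑ i ∈ range n, ((i : ℝ) + 2) / 2 ^ i ≤ 6 := by
  suffices h : ∑ i ∈ range n, ((i : ℝ) + 2) / 2 ^ i = 6 - (2 * n + 6) / 2 ^ n by
    rw [h]
    linarith [show (0 : ℝ) ≤ (2 * n + 6) / 2 ^ n by positivity]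
  induction n with
  | zero => norm_num
  | succ n ih =>
    rw [sum_range_succ, ih]
    push_cast
    field_simp
    ring

lemma log_two_pow_mul_ceil_add_one_le {t : ℝ} (ht : 1 ≤ t) (i : ℕ) :
    log (2 ^ (i + 1) * ⌈t⌉₊ : ℕ) + 1 ≤ 3 * log (2 * t) * (i + 2) := by
  have hlog2 : log 2 ≤ log (2 * t) := log_le_log two_pos (by linarith)
  have hlogt : log ⌈t⌉₊ ≤ log (2 * t) :=
    log_le_log (by positivity) ((Nat.ceil_lt_add_one (by linarith)).le.trans (by linarith))
  push_cast
  rw [log_mul (by positivity) (by positivity), log_pow]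
  push_cast
  nlinarith [log_two_gt_d9, mul_nonneg i.cast_nonneg (sub_nonneg.2 hlog2)]

open Classical in
lemma card_isDense_div_two_pow_le {C t : ℝ} {X I i : ℕ} (hC : ∀ z t X : ℕ, 1 ≤ t → 2 ≤ X →
      #{n ∈ Icc 1 X | IsDense z t n} ≤ C * X * (log t + 1) / log X) (hC₀ : 0 ≤ C)
    (ht : 1 ≤ t) (hI : 1 ≤ I) (hiI : i ≤ I) (hle : 2 ^ (2 * I) ≤ X) (hlt : X < 2 ^ (2 * I + 2)) :
    (#{n ∈ Icc 1 (X / 2 ^ i) | IsDense 0 (2 ^ (i + 1) * ⌈t⌉₊) n} : ℝ) ≤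
      12 * C * X * log (2 * t) / log X * ((i + 2) / 2 ^ i) := by
  have hIX : 2 ^ I ≤ X / 2 ^ i := by
    refine (Nat.le_div_iff_mul_le (by positivity)).2 (le_trans ?_ hle)
    rw [two_mul, pow_add]
    gcongr
    exact one_le_two
  have hX : 1 < X := (Nat.one_lt_two_pow (by omega)).trans_le hle
  have hlogX : 0 < log X := log_pos (by exact_mod_cast hX)
  have hlog : log X / 4 ≤ log (X / 2 ^ i : ℕ) := by
    have hlo := log_le_log (by positivity) (Nat.cast_le (α := ℝ).2 hIX)
    have hhi := log_le_log (by positivity) (Nat.cast_le (α := ℝ).2 hlt.le)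
    rw [Nat.cast_pow, log_pow, Nat.cast_ofNat] at hlo hhi
    push_cast at hhi hlo ⊢
    nlinarith [log_pos one_lt_two, show (1 : ℝ) ≤ I by exact_mod_cast hI]
  have hdiv : ((X / 2 ^ i : ℕ) : ℝ) ≤ X / 2 ^ i := by
    simpa using Nat.cast_div_le (α := ℝ) (m := X) (n := 2 ^ i)
  have hlogT : 0 ≤ log (2 * t) := log_nonneg (by linarith)
  calc _ ≤ C * (X / 2 ^ i : ℕ) * (log (2 ^ (i + 1) * ⌈t⌉₊ : ℕ) + 1) / log (X / 2 ^ i : ℕ) :=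
        hC _ _ _ (Nat.mul_pos (by positivity) (by positivity))
          ((Nat.le_self_pow (by omega) 2).trans hIX)
    _ ≤ C * (X / 2 ^ i) * (3 * log (2 * t) * (i + 2)) / (log X / 4) := by
        gcongr
        exact log_two_pow_mul_ceil_add_one_le ht i
    _ = _ := by
        field_simp
        ring

open Classical in
lemma exists_sum_card_isDense_le : ∃ C : ℝ, 1 ≤ C ∧ ∀ (t : ℝ) (X I : ℕ), 1 ≤ t → 1 ≤ I →
    2 ^ (2 * I) ≤ X → X < 2 ^ (2 * I + 2) →
    ∑ i ∈ range (I + 1), (#{n ∈ Icc 1 (X / 2 ^ i) | IsDense 0 (2 ^ (i + 1) * ⌈t⌉₊) n} : ℝ) ≤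
      C * X * log (2 * t) / log X := by
  obtain ⟨C, hC, hcard⟩ := exists_card_isDense_le
  refine ⟨72 * C, by linarith, fun t X I ht hI hle hlt ↦ ?_⟩
  have hlogT : 0 ≤ log (2 * t) := log_nonneg (by linarith)
  calc _ ≤ ∑ i ∈ range (I + 1), 12 * C * X * log (2 * t) / log X * (((i : ℝ) + 2) / 2 ^ i) := by
        gcongr with i hi
        exact card_isDense_div_two_pow_le hcard (by linarith) ht hI (mem_range_succ_iff.1 hi)
          hle hlt
    _ ≤ 12 * C * X * log (2 * t) / log X * 6 := by
        rw [← mul_sum]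
        gcongr
        exact sum_range_add_two_div_two_pow_le _
    _ = _ := by ring

lemma exists_Axyzt_mul_log_floor_le : ∃ C : ℝ, 1 ≤ C ∧ ∀ x y z t : ℝ, 4 ≤ x → 1 ≤ t →
    Axyzt x y z t * log ⌊x⌋₊ ≤ C * x * log (2 * t) := by
  classical
  obtain ⟨C, hC, hsum⟩ := exists_sum_card_isDense_le
  refine ⟨16 * C, by linarith, fun x y z t hx ht ↦ ?_⟩
  set X := ⌊x⌋₊
  have hX : 4 ≤ X := Nat.le_floor (by exact_mod_cast hx)
  have hlogX : 0 < log X := log_pos (by exact_mod_cast (by omega : 1 < X))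
  have hlog2 : log 2 ≤ log (2 * t) := log_le_log two_pos (by linarith)
  have hlogT : 0 ≤ log (2 * t) := log_nonneg (by linarith)
  set I := Nat.log 2 X / 2
  have hI : 1 ≤ I := by
    have : 2 ≤ Nat.log 2 X := (Nat.le_log_iff_pow_le one_lt_two (by omega)).2 hX
    omega
  have hle : 2 ^ (2 * I) ≤ X :=
    (Nat.pow_le_pow_right two_pos (by omega)).trans (Nat.pow_log_le_self 2 (by omega))
  have hlt : X < 2 ^ (2 * I + 2) := Nat.lt_pow_of_log_lt one_lt_two (by omega)
  have hsqrt : (2 : ℝ) ^ I ≤ √X := le_sqrt_of_sq_le (by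
    rw [← pow_mul, mul_comm]
    exact_mod_cast hle)
  have hcover : (Axyzt x y z t : ℝ) ≤ 2 ^ (I + 1) + C * X * log (2 * t) / log X := by
    refine (Nat.cast_le.2 (Axyzt_le_two_pow_add_sum (by linarith) hlt)).trans ?_
    push_cast
    gcongr
    exact hsum t X I ht hI hle hlt
  calc Axyzt x y z t * log X ≤ (2 ^ (I + 1) + C * X * log (2 * t) / log X) * log X := by
        gcongr
    _ = 2 * 2 ^ I * log X + C * X * log (2 * t) := by
        field_simp
        ring
    _ ≤ 2 * √X * (2 * √X) + C * X * log (2 * t) := by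
        gcongr
        exact log_le_two_mul_sqrt X.cast_nonneg
    _ = (4 + C * log (2 * t)) * X := by
        linear_combination 4 * mul_self_sqrt (X.cast_nonneg (α := ℝ))
    _ ≤ 16 * C * log (2 * t) * x := by
        gcongr
        · nlinarith [log_two_gt_d9]
        · exact Nat.floor_le (by linarith)
    _ = _ := by ring

lemma exists_Axyzt_le : ∃ C : ℝ, 1 ≤ C ∧ ∀ x y z t : ℝ, 2 ≤ x → 1 ≤ t →
    Axyzt x y z t ≤ C * x * log (2 * t) / log x := by
  obtain ⟨C, hC, hle⟩ := exists_Axyzt_mul_log_floor_le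
  refine ⟨2 * C, by linarith, fun x y z t hx ht ↦ ?_⟩
  rw [le_div_iff₀ (log_pos (by linarith))]
  rcases lt_or_ge x 4 with hx4 | hx4
  · have hlog2 : log 2 ≤ log (2 * t) := log_le_log two_pos (by linarith)
    have hlogx : log x ≤ 2 * log 2 := by
      rw [← Nat.cast_ofNat, ← log_pow]
      exact log_le_log (by linarith) (by norm_num; linarith)
    calc Axyzt x y z t * log x ≤ x * (2 * log (2 * t)) := by
          gcongr
          · exact log_nonneg (by linarith)
          · exact Axyzt_le_self (by linarith)
          · linarith
      _ ≤ C * (x * (2 * log (2 * t))) :=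
          le_mul_of_one_le_left (mul_nonneg (by linarith) (by linarith [log_two_gt_d9])) hC
      _ = _ := by ring
  · have hX : (2 : ℝ) ≤ ⌊x⌋₊ := by exact_mod_cast Nat.le_floor (by exact_mod_cast hx)
    have hlogx : log x ≤ 2 * log ⌊x⌋₊ := by
      rw [← Nat.cast_ofNat, ← log_pow]
      refine log_le_log (by linarith) ?_
      nlinarith [Nat.lt_floor_add_one x]
    calc Axyzt x y z t * log x ≤ Axyzt x y z t * (2 * log ⌊x⌋₊) := by gcongr
      _ = 2 * (Axyzt x y z t * log ⌊x⌋₊) := by ring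
      _ ≤ 2 * (C * x * log (2 * t)) := by linarith [hle x y z t hx4 ht]
      _ = _ := by ring

/-! ### A lower bound for the reciprocal sum -/

lemma exp_neg_le_quadratic {x : ℝ} (hx : 0 ≤ x) : exp (-x) ≤ 1 - x + x ^ 2 / 2 := by
  have hquad : 0 < 1 - x + x ^ 2 / 2 := by nlinarith [sq_nonneg (x - 1)]
  rw [exp_neg, inv_le_comm₀ (exp_pos x) hquad]
  refine le_trans ?_ (quadratic_le_exp_of_nonneg hx)
  rw [inv_le_iff_one_le_mul₀ hquad]
  nlinarith [sq_nonneg (x ^ 2)]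

lemma sub_sq_le_one_sub_rpow_neg_div {p : ℕ} (hp : 0 < p) (hδ : 0 ≤ δ) :
    δ * (log p / p) - δ ^ 2 / 2 * (log p / p * log p) ≤ (1 - (p : ℝ) ^ (-δ)) / p := by
  have hp' : (0 : ℝ) < p := by exact_mod_cast hp
  have hexp := exp_neg_le_quadratic (mul_nonneg (log_natCast_nonneg p) hδ)
  rw [rpow_def_of_pos hp', mul_neg, le_div_iff₀ hp']
  calc _ = δ * log p - δ ^ 2 / 2 * log p ^ 2 := by field_simp
    _ ≤ _ := by linarith

lemma exists_le_sum_one_sub_rpow_neg_div (z : ℕ) : ∃ C : ℝ, 0 ≤ C ∧ ∀ (y : ℕ) (δ : ℝ), 0 ≤ δ →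
    δ * (log y - C) - δ ^ 2 / 2 * (log y * (log y + log 4)) ≤
      ∑ p ∈ Nat.primesLE y with z < p, (1 - (p : ℝ) ^ (-δ)) / p := by
  obtain ⟨C, hC₀, hC⟩ := exists_le_sum_primesLE_filter_log_div z
  refine ⟨C, hC₀, fun y δ hδ ↦ ?_⟩
  have hsq : ∑ p ∈ Nat.primesLE y with z < p, log p / p * log p ≤ log y * (log y + log 4) := by
    have hterm {p : ℕ} : 0 ≤ log p / p := div_nonneg (log_natCast_nonneg p) p.cast_nonneg
    calc _ ≤ ∑ p ∈ Nat.primesLE y with z < p, log y * (log p / p) := by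
          refine sum_le_sum fun p hp ↦ ?_
          obtain ⟨hpy, hp⟩ := Nat.mem_primesLE.1 (mem_filter.1 hp).1
          have := hp.pos
          rw [mul_comm]
          gcongr
      _ ≤ ∑ p ∈ Nat.primesLE y, log y * (log p / p) :=
          sum_le_sum_of_subset_of_nonneg (filter_subset _ _) fun p _ _ ↦
            mul_nonneg (log_natCast_nonneg y) hterm
      _ ≤ log y * (log y + log 4) := by
          rw [← mul_sum]
          gcongr
          exact sum_primesLE_log_div_le y
  calc _ ≤ δ * ∑ p ∈ Nat.primesLE y with z < p, log p / p -
        δ ^ 2 / 2 * ∑ p ∈ Nat.primesLE y with z < p, log p / p * log p := by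
        gcongr
        exact hC y
    _ = ∑ p ∈ Nat.primesLE y with z < p,
        (δ * (log p / p) - δ ^ 2 / 2 * (log p / p * log p)) := by
        rw [sum_sub_distrib, mul_sum, mul_sum]
    _ ≤ _ := sum_le_sum fun p hp ↦ sub_sq_le_one_sub_rpow_neg_div
        (Nat.mem_primesLE.1 (mem_filter.1 hp).1).2.pos hδ

lemma sievePrimes_eq_filter_primesLE {y : ℕ} (hy : y < N) :
    sievePrimes z N y = {p ∈ Nat.primesLE y | z < p} :=
  filter_congr fun _ hp ↦ and_iff_left ((Nat.mem_primesLE.1 hp).1.trans_lt hy)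

lemma exists_mul_sub_le_denseWeight_one_add (z : ℕ) : ∃ C : ℝ, 0 ≤ C ∧ ∀ (t N m : ℕ) (δ : ℝ),
    4 ≤ t → m ≠ 0 → t * m < N → 0 < δ →
      denseWeight z t N 1 m * (1 + δ * (log t - C)) -
          δ ^ 2 * (denseWeight z t N 1 m * log (t * m : ℕ) ^ 2) ≤
        denseWeight z t N (1 + δ) m := by
  obtain ⟨C, hC₀, hC⟩ := exists_le_sum_one_sub_rpow_neg_div z
  refine ⟨C, hC₀, fun t N m δ ht hm hN hδ ↦ ?_⟩
  have hprimes := hC (t * m) δ hδ.le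
  rw [← sievePrimes_eq_filter_primesLE hN] at hprimes
  refine le_trans ?_ (le_denseWeight_one_add hδ hprimes)
  have hlog4 : log 4 ≤ log (t * m : ℕ) := log_le_log (by norm_num) (by
    exact_mod_cast ht.trans (Nat.le_mul_of_pos_right t (Nat.pos_of_ne_zero hm)))
  have hlogm : log m = log (t * m : ℕ) - log t := by
    rw [log_natCast_mul (by omega) hm]
    ring
  set L := log (t * m : ℕ)
  have hL : 0 ≤ L := (log_nonneg (by norm_num)).trans hlog4
  calc denseWeight z t N 1 m * (1 + δ * (log t - C)) - δ ^ 2 * (denseWeight z t N 1 m * L ^ 2)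
      = denseWeight z t N 1 m * (δ * (log t - C) - δ ^ 2 * L ^ 2 + 1) := by ring
    _ ≤ denseWeight z t N 1 m *
        (δ * (L - C) - δ ^ 2 / 2 * (L * (L + log 4)) - δ * log m + 1) := by
        refine mul_le_mul_of_nonneg_left ?_ (denseWeight_nonneg z t N one_pos m)
        rw [hlogm]
        nlinarith [mul_le_mul_of_nonneg_left (mul_le_mul_of_nonneg_left hlog4 hL) (sq_nonneg δ)]
    _ ≤ _ := by
        gcongr
        · exact denseWeight_nonneg z t N one_pos m
        · exact add_one_le_exp _

lemma exists_le_sum_Icc_denseWeight : ∃ C : ℝ, 1 ≤ C ∧ ∀ z t N M : ℕ, 1 ≤ t → 2 ≤ M →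
    1 - C * (log t + 1) / log M ≤ ∑ m ∈ Icc 1 M, denseWeight z t N 1 m := by
  obtain ⟨C, hC, htail⟩ := exists_sum_denseWeight_tail_le
  refine ⟨C, hC, fun z t N M ht hM ↦ ?_⟩
  have hzero : ∑ m ∈ Icc 1 M, denseWeight z t N 1 m = ∑ m ∈ range (M + 1), denseWeight z t N 1 m :=
    sum_subset (fun m hm ↦ mem_range_succ_iff.2 (mem_Icc.1 hm).2) fun m hm hm' ↦ by
      obtain rfl : m = 0 := by
        rw [mem_range_succ_iff] at hm
        rw [mem_Icc] at hm'
        omega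
      exact denseWeight_zero z t N 1
  rw [sub_le_iff_le_add, hzero]
  refine hasSum_le_of_sum_le (hasSum_denseWeight z t one_pos N) fun s ↦ ?_
  calc ∑ m ∈ s, denseWeight z t N 1 m
      ≤ ∑ m ∈ range (M + 1) ∪ s \ range (M + 1), denseWeight z t N 1 m := by
        refine sum_le_sum_of_subset_of_nonneg ?_ fun m _ _ ↦ denseWeight_nonneg z t N one_pos m
        rw [union_sdiff_self_eq_union]
        exact subset_union_right
    _ = ∑ m ∈ range (M + 1), denseWeight z t N 1 m +
        ∑ m ∈ s \ range (M + 1), denseWeight z t N 1 m := sum_union disjoint_sdiff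
    _ ≤ _ := by
        gcongr
        refine htail z t N M _ ht (by exact_mod_cast hM) fun m hm ↦ ?_
        rw [Finset.mem_sdiff, mem_range_succ_iff, not_le] at hm
        exact_mod_cast hm.2.le

lemma one_lt_of_log_natCast_pos {M : ℕ} (h : 0 < log M) : 1 < M := by
  by_contra! hM
  interval_cases M <;> simp at h

lemma exists_le_sum_denseWeight_mul_log_sq (z : ℕ) : ∃ (A : ℝ) (t₀ : ℕ), 1 ≤ A ∧ 1 ≤ t₀ ∧
    ∀ t M : ℕ, t₀ ≤ t → A * (log t + 1) ≤ log M →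
      (3 * log t + 1) * log M ≤
        16 * A * ∑ m ∈ Icc 1 M, denseWeight z t (t * M + 1) 1 m * log (t * m : ℕ) ^ 2 := by
  obtain ⟨C, hC, hmass⟩ := exists_le_sum_Icc_denseWeight
  obtain ⟨D, hD, hpoint⟩ := exists_mul_sub_le_denseWeight_one_add z
  obtain ⟨t₀, ht₀⟩ := exists_nat_ge (exp (2 * D + 4))
  refine ⟨16 * C, max t₀ 4, by linarith, by omega, fun t M ht hM ↦ ?_⟩
  have hlogt : 2 * D + 4 ≤ log t := (le_log_iff_exp_le (by exact_mod_cast (by omega : 0 < t))).2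
    (ht₀.trans (by exact_mod_cast (le_max_left _ _).trans ht))
  have hlogM : 0 < log M := lt_of_lt_of_le (by positivity) hM
  set N := t * M + 1
  set δ := 16 * C / log M with hδ
  have hδ₀ : 0 < δ := by positivity
  have hδM : δ * (log t + 1) ≤ 1 := by
    rwa [hδ, div_mul_eq_mul_div, div_le_one hlogM]
  set W := ∑ m ∈ Icc 1 M, denseWeight z t N 1 m
  set Q := ∑ m ∈ Icc 1 M, denseWeight z t N 1 m * log (t * m : ℕ) ^ 2
  have hW : 1 - δ * (log t + 1) / 16 ≤ W := by
    refine le_of_eq_of_le ?_ (hmass z t N M (by omega) (one_lt_of_log_natCast_pos hlogM))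
    rw [hδ]
    ring
  have hQ : W * (1 + δ * (log t - D)) - δ ^ 2 * Q ≤ 1 := by
    calc _ = ∑ m ∈ Icc 1 M, (denseWeight z t N 1 m * (1 + δ * (log t - D)) -
          δ ^ 2 * (denseWeight z t N 1 m * log (t * m : ℕ) ^ 2)) := by
          rw [sum_sub_distrib, sum_mul, mul_sum]
      _ ≤ ∑ m ∈ Icc 1 M, denseWeight z t N (1 + δ) m := by
          refine sum_le_sum fun m hm ↦ ?_
          rw [mem_Icc] at hm
          exact hpoint t N m δ (by omega) (by omega)
            (Nat.lt_succ_of_le (Nat.mul_le_mul_left t hm.2)) hδ₀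
      _ ≤ 1 := sum_denseWeight_le_one z t N (by linarith) _
  have hDt : 0 ≤ δ * (log t - D) := mul_nonneg hδ₀.le (by linarith)
  have hδQ : δ * ((3 * log t + 1) / 16) ≤ δ * (δ * Q) := by
    nlinarith [mul_le_mul_of_nonneg_right hW (by linarith : 0 ≤ 1 + δ * (log t - D)),
      mul_le_mul_of_nonneg_right hδM hDt, mul_le_mul_of_nonneg_left hlogt hδ₀.le]
  have hfinal := le_of_mul_le_mul_left hδQ hδ₀
  rw [hδ, div_mul_eq_mul_div, le_div_iff₀ hlogM] at hfinal
  linarith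

/-- `denseSum z t M u` is the reciprocal sum of the dense integers in `(exp u, M]`. -/
noncomputable def denseSum (z t M : ℕ) (u : ℝ) : ℝ :=
  open Classical in ∑ m ∈ Icc 1 M with IsDense z t m ∧ u < log m, (m : ℝ)⁻¹

lemma exists_denseWeight_mul_log_sq_le (z : ℕ) : ∃ C : ℝ, 0 < C ∧ ∀ t N m : ℕ, t * m < N →
    denseWeight z t N 1 m * log (t * m : ℕ) ^ 2 ≤ C * log (t * m : ℕ) * (m : ℝ)⁻¹ := by
  obtain ⟨C, hC, hprod⟩ := exists_eulerProduct_filter_lt_le z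
  refine ⟨C, hC, fun t N m hN ↦ ?_⟩
  have hlog : 0 ≤ log (t * m : ℕ) := log_natCast_nonneg _
  rcases hlog.eq_or_lt with h | h
  · rw [← h]
    simp
  by_cases hdense : IsDense z t m ∧ m ∈ Nat.smoothNumbers N
  · have htm : 1 < t * m := one_lt_of_log_natCast_pos h
    rw [denseWeight_of_isDense hdense.1 hdense.2, rpow_neg_one, sievePrimes_eq_filter_primesLE hN]
    calc _ ≤ (m : ℝ)⁻¹ * (C / log (t * m : ℕ)) * log (t * m : ℕ) ^ 2 := by
          gcongr
          refine (hprod _ htm.le).trans ?_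
          gcongr
          linarith
      _ = _ := by field_simp
  · rw [denseWeight, if_neg hdense, zero_mul]
    positivity

lemma exists_sum_denseWeight_mul_log_sq_le_denseSum (z : ℕ) : ∃ C : ℝ, 0 < C ∧
    ∀ (t M : ℕ) (u : ℝ), 1 ≤ t → log t ≤ log M →
      ∑ m ∈ Icc 1 M with u < log (m : ℕ), denseWeight z t (t * M + 1) 1 m * log (t * m : ℕ) ^ 2 ≤
        C * log M * denseSum z t M u := by
  classical
  obtain ⟨C, hC, hle⟩ := exists_denseWeight_mul_log_sq_le z
  refine ⟨2 * C, by positivity, fun t M u ht htM ↦ ?_⟩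
  simp only [denseSum, and_comm (b := u < _)]
  rw [← filter_filter, mul_sum, sum_filter (IsDense z t)]
  refine sum_le_sum fun m hm ↦ ?_
  rw [mem_filter, mem_Icc] at hm
  split_ifs with hdense
  · refine (hle t (t * M + 1) m (Nat.lt_succ_of_le (Nat.mul_le_mul_left t hm.1.2))).trans ?_
    have hlogm : log m ≤ log M := log_le_log (by exact_mod_cast hm.1.1) (by exact_mod_cast hm.1.2)
    rw [log_natCast_mul ht (by omega), mul_comm 2 C, mul_assoc C 2]
    gcongr
    linarith
  · rw [denseWeight_of_not_isDense hdense, zero_mul]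

lemma exists_mul_log_le_denseSum (z : ℕ) : ∃ (t₀ : ℕ) (b K c : ℝ),
    1 ≤ t₀ ∧ 0 < b ∧ 0 < K ∧ 0 < c ∧ ∀ t M : ℕ, t₀ ≤ t → K * (log t + 1) ≤ log M →
      c * log t ≤ denseSum z t M (b * log M) := by
  obtain ⟨A, t₀, hA, ht₀, hlower⟩ := exists_le_sum_denseWeight_mul_log_sq z
  obtain ⟨C, hC, hsmall⟩ := exists_sum_denseWeight_mul_log_sq_le
  obtain ⟨D, hD, hlarge⟩ := exists_sum_denseWeight_mul_log_sq_le_denseSum z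
  refine ⟨t₀, 1 / (16 * A * C), 16 * A * C, 1 / (8 * A * D), ht₀, by positivity, by positivity,
    by positivity, fun t M ht hM ↦ ?_⟩
  set b := 1 / (16 * A * C) with hb
  have hlogt : 0 ≤ log t := log_natCast_nonneg t
  have hAC : A ≤ 16 * A * C := by nlinarith
  have hAM : A * (log t + 1) ≤ log M :=
    (mul_le_mul_of_nonneg_right hAC (by linarith)).trans hM
  have htM : log t + 1 ≤ log M := (le_mul_of_one_le_left (by linarith) hA).trans hAM
  have hbM : log t + 1 ≤ b * log M := by
    rw [hb, one_div_mul_eq_div, le_div_iff₀ (by positivity)]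
    linarith
  have hQsmall : 16 * A * ∑ m ∈ Icc 1 M with ¬ b * log M < log (m : ℕ),
      denseWeight z t (t * M + 1) 1 m * log (t * m : ℕ) ^ 2 ≤ (log t + 1) * log M := by
    calc _ ≤ 16 * A * (C * (log t + 1) * (b * log M)) := by
          gcongr
          refine hsmall _ _ _ _ _ (ht₀.trans ht) hbM fun m hm ↦ ?_
          rw [mem_filter, mem_Icc] at hm
          exact ⟨by omega, not_lt.1 hm.2⟩
      _ = _ := by
          rw [hb]
          field_simp
  have hQ := hlower t M ht hAM
  rw [← sum_filter_add_sum_filter_not (Icc 1 M) (fun m ↦ b * log M < log m), mul_add] at hQ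
  have hQlarge := mul_le_mul_of_nonneg_left
    (hlarge t M (b * log M) (ht₀.trans ht) (by linarith)) (by positivity : 0 ≤ 16 * A)
  rw [one_div_mul_eq_div, div_le_iff₀ (by positivity)]
  refine le_of_mul_le_mul_right (a := log M) ?_ (by linarith)
  linarith

/-! ### Moving the reciprocal sum up to large integers -/

lemma card_le_of_log_le_mul_log {n k : ℕ} {P : Finset ℕ} (hn : n ≠ 0)
    (hP : ∀ p ∈ P, p.Prime ∧ p ∣ n ∧ log n ≤ k * log p) : #P ≤ k := by
  rcases P.eq_empty_or_nonempty with rfl | ⟨q, hq⟩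
  · simp
  have hlog : 0 < log n := log_pos <| by
    exact_mod_cast (hP q hq).1.one_lt.trans_le
      (Nat.le_of_dvd (Nat.pos_of_ne_zero hn) (hP q hq).2.1)
  have hprod : ∏ p ∈ P, p ≤ n := Nat.le_of_dvd (Nat.pos_of_ne_zero hn) <|
    prod_primes_dvd n (fun p hp ↦ (hP p hp).1.prime) fun p hp ↦ (hP p hp).2.1
  have hsum : ∑ p ∈ P, log p ≤ log n := by
    rw [← log_prod fun p hp ↦ Nat.cast_ne_zero.2 (hP p hp).1.ne_zero]
    rw [← Nat.cast_prod]
    exact log_le_log (Nat.cast_pos.2 (prod_pos fun p hp ↦ (hP p hp).1.pos)) (Nat.cast_le.2 hprod)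
  have hcard : #P * log n ≤ k * log n :=
    calc #P * log n ≤ ∑ p ∈ P, k * log p := by
          rw [← nsmul_eq_mul]
          exact card_nsmul_le_sum _ _ _ fun p hp ↦ (hP p hp).2.2
      _ ≤ k * log n := by
          rw [← mul_sum]
          gcongr
  exact_mod_cast le_of_mul_le_mul_right hcard hlog

/-- An integer `n` has at most `k` prime factors `p` with `n ≤ p ^ k`, so it arises at most `k`
times as a product `m * p`. -/
lemma sum_sum_mul_prime_le {D F : Finset ℕ} {P : ℕ → Finset ℕ} {g : ℕ → ℝ} {k : ℕ}
    (hg : ∀ n, 0 ≤ g n) (hF : ∀ n ∈ F, n ≠ 0)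
    (hP : ∀ m ∈ D, ∀ p ∈ P m, p.Prime ∧ m * p ∈ F ∧ log (m * p : ℕ) ≤ k * log p) :
    ∑ m ∈ D, ∑ p ∈ P m, g (m * p) ≤ k * ∑ n ∈ F, g n := by
  have hmaps : ∀ q ∈ D.sigma P, q.1 * q.2 ∈ F := fun q hq ↦
    (hP q.1 (mem_sigma.1 hq).1 q.2 (mem_sigma.1 hq).2).2.1
  rw [← sum_sigma D P fun q ↦ g (q.1 * q.2), ← sum_fiberwise_of_maps_to hmaps, mul_sum]
  gcongr with n hn
  have hinj : Set.InjOn (fun q : Σ _ : ℕ, ℕ ↦ q.2)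
      (({q ∈ D.sigma P | q.1 * q.2 = n} : Finset (Σ _ : ℕ, ℕ)) : Set (Σ _ : ℕ, ℕ)) := by
    rintro ⟨m, p⟩ hq ⟨m', p'⟩ hq' rfl
    rw [mem_coe, mem_filter, mem_sigma] at hq hq'
    have hp := (hP m hq.1.1 p hq.1.2).1.pos
    exact Sigma.ext (Nat.eq_of_mul_eq_mul_right hp (hq.2.trans hq'.2.symm)) HEq.rfl
  have hcard : #{q ∈ D.sigma P | q.1 * q.2 = n} ≤ k := by
    rw [← card_image_of_injOn hinj]
    refine card_le_of_log_le_mul_log (hF n hn) fun p hp ↦ ?_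
    obtain ⟨⟨m, p⟩, hq, rfl⟩ := mem_image.1 hp
    obtain ⟨hmp, rfl⟩ := mem_filter.1 hq
    obtain ⟨hp, -, hlog⟩ := hP m (mem_sigma.1 hmp).1 p (mem_sigma.1 hmp).2
    exact ⟨hp, dvd_mul_left p m, hlog⟩
  calc ∑ q ∈ D.sigma P with q.1 * q.2 = n, g (q.1 * q.2)
      = #{q ∈ D.sigma P | q.1 * q.2 = n} * g n := by
        rw [← nsmul_eq_mul, ← sum_const]
        exact sum_congr rfl fun q hq ↦ by rw [(mem_filter.1 hq).2]
    _ ≤ k * g n := by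
        gcongr
        exact hg n

/-- The primes `p > z` with `m ^ (2 / 5) < p ≤ √m`: multiplying a dense integer `m` by one of them
gives a noticeably larger dense integer. -/
noncomputable def mediumPrimes (z m : ℕ) : Finset ℕ :=
  {p ∈ Nat.primesLE m.sqrt | z < p ∧ 2 / 5 * log m < log p}

lemma mem_mediumPrimes {p m : ℕ} : p ∈ mediumPrimes z m ↔
    (p ^ 2 ≤ m ∧ p.Prime) ∧ z < p ∧ 2 / 5 * log m < log p := by
  rw [mediumPrimes, mem_filter, Nat.mem_primesLE, Nat.le_sqrt']

lemma log_le_half_log_of_sq_le {p m : ℕ} (hp : 0 < p) (h : p ^ 2 ≤ m) :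
    log p ≤ 1 / 2 * log m := by
  have hsq : log ((p : ℝ) ^ 2) ≤ log m := log_le_log (by positivity) (by exact_mod_cast h)
  rw [log_pow] at hsq
  push_cast at hsq
  linarith

lemma half_log_sub_log_two_le_log_sqrt {m : ℕ} (hm : m ≠ 0) :
    1 / 2 * log m - log 2 ≤ log m.sqrt := by
  have hsqrt : 0 < m.sqrt := Nat.sqrt_pos.2 (Nat.pos_of_ne_zero hm)
  have hle : m ≤ (2 * m.sqrt) ^ 2 := by
    have := Nat.lt_succ_sqrt m
    rw [Nat.succ_eq_add_one] at this
    nlinarith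
  have hlog : log m ≤ log ((2 * m.sqrt : ℝ) ^ 2) :=
    log_le_log (by positivity) (by exact_mod_cast hle)
  rw [log_pow, log_mul (by norm_num) (by positivity)] at hlog
  push_cast at hlog
  linarith

lemma sum_primesLE_filter_log_le_le {n : ℕ} {L : ℝ} (hL : 0 ≤ L) :
    ∑ p ∈ Nat.primesLE n with log (p : ℕ) ≤ L, log p / p ≤ L + log 4 := by
  have hfloor : (⌊exp L⌋₊ : ℝ) ≤ exp L := Nat.floor_le (exp_pos L).le
  have hone : 1 ≤ ⌊exp L⌋₊ := Nat.one_le_floor_iff _ |>.2 (one_le_exp hL)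
  calc _ ≤ ∑ p ∈ Nat.primesLE ⌊exp L⌋₊, log p / p := by
        refine sum_le_sum_of_subset_of_nonneg (fun p hp ↦ ?_) fun p _ _ ↦
          div_nonneg (log_natCast_nonneg p) p.cast_nonneg
        rw [mem_filter, Nat.mem_primesLE] at hp
        refine Nat.mem_primesLE.2 ⟨Nat.le_floor ?_, hp.1.2⟩
        exact (log_le_iff_le_exp (Nat.cast_pos.2 hp.1.2.pos)).1 hp.2
    _ ≤ log ⌊exp L⌋₊ + log 4 := sum_primesLE_log_div_le _
    _ ≤ L + log 4 := by
        gcongr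
        exact (log_le_iff_le_exp (Nat.cast_pos.2 hone)).2 hfloor

lemma exists_le_sum_mediumPrimes_inv (z : ℕ) : ∃ v₀ : ℝ, 0 < v₀ ∧ ∀ m : ℕ, v₀ ≤ log m →
    1 / 10 ≤ ∑ p ∈ mediumPrimes z m, (p : ℝ)⁻¹ := by
  obtain ⟨C, hC₀, hC⟩ := exists_le_sum_primesLE_filter_log_div z
  refine ⟨20 * (C + log 2 + log 4), by positivity, fun m hm ↦ ?_⟩
  have hlogm : 0 < log m := lt_of_lt_of_le (by positivity) hm
  have hm₀ : m ≠ 0 := (one_lt_of_log_natCast_pos hlogm).ne_bot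
  have hsplit := hC m.sqrt
  rw [← sum_filter_add_sum_filter_not _ (fun p : ℕ ↦ log p ≤ 2 / 5 * log m)] at hsplit
  have hsmall : ∑ p ∈ {p ∈ Nat.primesLE m.sqrt | z < p} with log (p : ℕ) ≤ 2 / 5 * log m,
      log p / p ≤ 2 / 5 * log m + log 4 := by
    refine le_trans ?_ (sum_primesLE_filter_log_le_le (n := m.sqrt) (by positivity))
    exact sum_le_sum_of_subset_of_nonneg (filter_subset_filter _ (filter_subset _ _)) fun p _ _ ↦
      div_nonneg (log_natCast_nonneg p) p.cast_nonneg
  have hlarge : ∑ p ∈ {p ∈ Nat.primesLE m.sqrt | z < p} with ¬ log (p : ℕ) ≤ 2 / 5 * log m,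
      log p / p ≤ 1 / 2 * log m * ∑ p ∈ mediumPrimes z m, (p : ℝ)⁻¹ := by
    simp only [not_le]
    rw [filter_filter, ← mediumPrimes, mul_sum]
    refine sum_le_sum fun p hp ↦ ?_
    obtain ⟨⟨hpm, hp⟩, -⟩ := mem_mediumPrimes.1 hp
    rw [div_eq_mul_inv]
    gcongr
    exact log_le_half_log_of_sq_le hp.pos hpm
  have hsqrt := half_log_sub_log_two_le_log_sqrt hm₀
  refine le_of_mul_le_mul_left ?_ hlogm
  linarith

lemma denseSum_anti {M : ℕ} {u v : ℝ} (h : u ≤ v) : denseSum z t M v ≤ denseSum z t M u := by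
  classical
  refine sum_le_sum_of_subset_of_nonneg (fun m hm ↦ ?_) fun m _ _ ↦ by positivity
  rw [mem_filter] at hm ⊢
  exact ⟨hm.1, hm.2.1, h.trans_lt hm.2.2⟩

open Classical in
lemma exists_sum_isDense_inv_le_denseSum (z : ℕ) : ∃ u₀ : ℝ, 0 < u₀ ∧ ∀ (t M : ℕ) (u : ℝ),
    1 ≤ t → u₀ ≤ u → 3 / 2 * (7 / 5 * u) ≤ log M →
      ∑ m ∈ Icc 1 M with (IsDense z t m ∧ u < log m) ∧ log m ≤ 7 / 5 * u, (m : ℝ)⁻¹ ≤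
        40 * denseSum z t M (7 / 5 * u) := by
  obtain ⟨u₀, hu₀, hinv⟩ := exists_le_sum_mediumPrimes_inv z
  refine ⟨u₀, hu₀, fun t M u ht hu huM ↦ ?_⟩
  set B := {m ∈ Icc 1 M | (IsDense z t m ∧ u < log m) ∧ log m ≤ 7 / 5 * u}
  have hM : M ≠ 0 := (one_lt_of_log_natCast_pos (by linarith)).ne_bot
  have hpairs : ∑ m ∈ B, ∑ p ∈ mediumPrimes z m, ((m * p : ℕ) : ℝ)⁻¹ ≤
      (4 : ℕ) * denseSum z t M (7 / 5 * u) := by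
    refine sum_sum_mul_prime_le (g := fun n ↦ (n : ℝ)⁻¹) (fun n ↦ by positivity)
      (fun n hn ↦ (mem_filter.1 hn).2.1.1) fun m hm p hp ↦ ?_
    obtain ⟨-, ⟨hdense, hum⟩, hmu⟩ := mem_filter.1 hm
    obtain ⟨⟨hpm, hp⟩, hzp, hmp⟩ := mem_mediumPrimes.1 hp
    have hpm' := log_le_half_log_of_sq_le hp.pos hpm
    have hpos : 0 < m * p := Nat.mul_pos (Nat.pos_of_ne_zero hdense.1) hp.pos
    have hmul : log (m * p : ℕ) = log m + log p :=
      log_natCast_mul (Nat.pos_of_ne_zero hdense.1) hp.ne_zero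
    rw [mem_filter, mem_Icc, hmul]
    refine ⟨hp, ⟨⟨hpos, ?_⟩, ?_, by linarith⟩, ?_⟩
    · have hlog : log (m * p : ℕ) ≤ log M := by linarith
      rwa [log_le_log_iff (by exact_mod_cast hpos) (by exact_mod_cast Nat.pos_of_ne_zero hM),
        Nat.cast_le] at hlog
    · exact hdense.mul_prime hp hzp <| (Nat.le_self_pow two_ne_zero p).trans <|
        hpm.trans (Nat.le_mul_of_pos_left m ht)
    · push_cast
      linarith
  calc ∑ m ∈ B, (m : ℝ)⁻¹
      ≤ ∑ m ∈ B, 10 * ∑ p ∈ mediumPrimes z m, ((m * p : ℕ) : ℝ)⁻¹ := by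
        refine sum_le_sum fun m hm ↦ ?_
        simp only [Nat.cast_mul, mul_inv]
        rw [← mul_sum, mul_left_comm]
        refine le_mul_of_one_le_right (by positivity) ?_
        linarith [hinv m (hu.trans (mem_filter.1 hm).2.1.2.le)]
    _ = 10 * ∑ m ∈ B, ∑ p ∈ mediumPrimes z m, ((m * p : ℕ) : ℝ)⁻¹ := by rw [mul_sum]
    _ ≤ _ := by
        push_cast at hpairs ⊢
        linarith

lemma exists_denseSum_le_denseSum_mul (z : ℕ) : ∃ u₀ : ℝ, 0 < u₀ ∧ ∀ (t M : ℕ) (u : ℝ),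
    1 ≤ t → u₀ ≤ u → 3 / 2 * (7 / 5 * u) ≤ log M →
      denseSum z t M u ≤ 41 * denseSum z t M (7 / 5 * u) := by
  classical
  obtain ⟨u₀, hu₀, hle⟩ := exists_sum_isDense_inv_le_denseSum z
  refine ⟨u₀, hu₀, fun t M u ht hu huM ↦ ?_⟩
  rw [denseSum, ← sum_filter_add_sum_filter_not _ (fun m : ℕ ↦ 7 / 5 * u < log m)]
  simp only [filter_filter, not_lt]
  calc _ ≤ denseSum z t M (7 / 5 * u) + 40 * denseSum z t M (7 / 5 * u) := by
        refine add_le_add ?_ (hle t M u ht hu huM)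
        refine sum_le_sum_of_subset_of_nonneg (fun m hm ↦ ?_) fun m _ _ ↦ by positivity
        rw [mem_filter] at hm ⊢
        exact ⟨hm.1, hm.2.1.1, hm.2.2⟩
    _ = 41 * denseSum z t M (7 / 5 * u) := by ring

lemma exists_denseSum_le_denseSum_pow_mul (z : ℕ) : ∃ u₀ : ℝ, 0 < u₀ ∧
    ∀ (k t M : ℕ) (u : ℝ), 1 ≤ t → u₀ ≤ u → 3 / 2 * ((7 / 5) ^ k * u) ≤ log M →
      denseSum z t M u ≤ 41 ^ k * denseSum z t M ((7 / 5) ^ k * u) := by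
  obtain ⟨u₀, hu₀, hstep⟩ := exists_denseSum_le_denseSum_mul z
  refine ⟨u₀, hu₀, fun k t M u ht hu huM ↦ ?_⟩
  have hupos : 0 < u := hu₀.trans_le hu
  induction k with
  | zero => simp
  | succ k ih =>
    have hpow : (1 : ℝ) ≤ (7 / 5) ^ k := one_le_pow₀ (by norm_num)
    rw [pow_succ', mul_assoc] at huM
    have hk : u ≤ (7 / 5) ^ k * u := le_mul_of_one_le_left hupos.le hpow
    calc denseSum z t M u ≤ 41 ^ k * denseSum z t M ((7 / 5) ^ k * u) := ih (by linarith)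
      _ ≤ 41 ^ k * (41 * denseSum z t M (7 / 5 * ((7 / 5) ^ k * u))) := by
          gcongr
          exact hstep t M _ ht (hu.trans hk) huM
      _ = 41 ^ (k + 1) * denseSum z t M ((7 / 5) ^ (k + 1) * u) := by
          rw [pow_succ 41, pow_succ' (7 / 5 : ℝ), mul_assoc, mul_assoc]

lemma exists_mul_log_le_denseSum_two_thirds (z : ℕ) : ∃ (t₀ : ℕ) (K c : ℝ),
    1 ≤ t₀ ∧ 0 < K ∧ 0 < c ∧ ∀ t M : ℕ, t₀ ≤ t → K * (log t + 1) ≤ log M →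
      c * log t ≤ denseSum z t M (2 / 3 * log M) := by
  obtain ⟨t₀, b, K, c, ht₀, hb, hK, hc, hsum⟩ := exists_mul_log_le_denseSum z
  obtain ⟨u₀, hu₀, hiter⟩ := exists_denseSum_le_denseSum_pow_mul z
  obtain ⟨k, hk⟩ := pow_unbounded_of_one_lt (1 / b) (by norm_num : (1 : ℝ) < 7 / 5)
  rw [div_lt_iff₀ hb] at hk
  refine ⟨t₀, max K (3 / 2 * u₀ * (7 / 5) ^ k), c / 41 ^ k, ht₀, by positivity, by positivity,
    fun t M ht hM ↦ ?_⟩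
  have hlogt : 0 ≤ log t := log_natCast_nonneg t
  have hKM : K * (log t + 1) ≤ log M := hM.trans' (by gcongr; exact le_max_left _ _)
  have huM : 3 / 2 * u₀ * (7 / 5) ^ k ≤ log M := by
    refine le_trans (le_trans (le_max_right K _) ?_) hM
    exact le_mul_of_one_le_right (by positivity) (by linarith)
  have hlogM : 0 < log M := lt_of_lt_of_le (by positivity) huM
  set u := 2 / 3 * log M / (7 / 5) ^ k
  have hku : (7 / 5) ^ k * u = 2 / 3 * log M := mul_div_cancel₀ _ (by positivity)
  rw [div_mul_eq_mul_div, div_le_iff₀' (by positivity), ← hku]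
  calc c * log t ≤ denseSum z t M (b * log M) := hsum t M ht hKM
    _ ≤ denseSum z t M u := by
        refine denseSum_anti ((div_le_iff₀ (by positivity)).2 ?_)
        nlinarith
    _ ≤ 41 ^ k * denseSum z t M ((7 / 5) ^ k * u) := by
        refine hiter k t M u (ht₀.trans ht) ?_ (by linarith)
        rw [le_div_iff₀ (by positivity)]
        linarith

/-! ### The lower bound -/

lemma Pmax_le {n : ℕ} {y : ℝ} (hy : 1 ≤ y) (h : ∀ p : ℕ, p.Prime → p ∣ n → p ≤ y) :
    Pmax n ≤ y := by
  rw [Pmax]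
  split_ifs
  · simpa using hy
  · have hsup : n.primeFactors.sup id ≤ ⌊y⌋₊ := Finset.sup_le fun p hp ↦
      Nat.le_floor (h p (Nat.prime_of_mem_primeFactors hp) (Nat.dvd_of_mem_primeFactors hp))
    exact (Nat.le_floor_iff (by linarith)).1 hsup

lemma card_isDense_le_Axyzt {x y v s : ℝ} {F : Finset ℕ} (ht : 1 ≤ t) (hy : 1 ≤ y) (hv : v ≤ z)
    (hF : ∀ n ∈ F, IsDense z t n ∧ (n : ℝ) ≤ x ∧ t * n ≤ x * s ∧
      ∀ p : ℕ, p.Prime → p ∣ n → p ≤ y) : #F ≤ Axyzt x y v s := by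
  rw [Axyzt, ← Set.ncard_coe_finset]
  refine Set.ncard_le_ncard (fun n hn ↦ ?_)
    ((Set.finite_Iic ⌊x⌋₊).subset fun n hn ↦ Nat.le_floor hn.2.1)
  obtain ⟨hdense, hnx, htn, hpy⟩ := hF n hn
  refine ⟨Nat.pos_of_ne_zero hdense.1, hnx, Pmax_le hy hpy, fun p hp hpn ↦ ?_, ?_⟩
  · exact hv.trans_lt (Nat.cast_lt.2 (hdense.2 p hp hpn).1)
  · exact le_trans (by exact_mod_cast hdense.SS_le ht) htn

lemma one_le_Axyzt {x y z t : ℝ} (hx : 1 ≤ x) (hy : 1 ≤ y) (ht : 1 ≤ t) : 1 ≤ Axyzt x y z t := by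
  refine card_isDense_le_Axyzt (F := {1}) le_rfl hy (Nat.le_ceil z) fun n hn ↦ ?_
  obtain rfl := mem_singleton.1 hn
  refine ⟨isDense_one _ 1, by simpa using hx, by simpa using one_le_mul_of_one_le_of_one_le hx ht,
    fun p hp hp1 ↦ absurd (Nat.dvd_one.1 hp1) hp.ne_one⟩

lemma div_four_mul_log_le_primeCounting {v : ℝ} (hv : 8 ≤ v) :
    v / (4 * log v) ≤ Nat.primeCounting ⌊v⌋₊ := by
  have hlogv : 0 < log v := log_pos (by linarith)
  refine le_trans ?_ (Chebyshev.pi_ge' (by linarith : 1 < v))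
  rw [← div_div]
  gcongr
  have hlog : log (v + 2) ≤ (v + 2) / 16 - 1 + 4 * log 2 := by
    have hsplit : log (v + 2) = log ((v + 2) / 16) + log (2 ^ 4) := by
      rw [← log_mul (by positivity) (by positivity)]
      ring_nf
    rw [hsplit, log_pow]
    push_cast
    linarith [log_le_sub_one_of_pos (by positivity : 0 < (v + 2) / 16)]
  nlinarith [log_two_gt_d9, log_two_lt_d9]

lemma div_le_card_primesLE_filter_lt {v w R : ℝ} (hw : 0 ≤ w) (hv : 8 ≤ v) (hR : log v ≤ R)
    (hwv : w ≤ v / (8 * R)) : v / (8 * R) ≤ #{p ∈ Nat.primesLE ⌊v⌋₊ | w < (p : ℕ)} := by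
  have hlogv : 0 < log v := log_pos (by linarith)
  have hcount : v / (4 * R) ≤ #(Nat.primesLE ⌊v⌋₊) := by
    rw [Nat.primesLE_card_eq_primeCounting]
    refine le_trans ?_ (div_four_mul_log_le_primeCounting hv)
    gcongr
  have hsmall : #{p ∈ Nat.primesLE ⌊v⌋₊ | ¬ w < (p : ℕ)} ≤ w := by
    refine le_trans (Nat.cast_le.2 ?_) (Nat.floor_le hw)
    calc _ ≤ #(Icc 1 ⌊w⌋₊) := card_le_card fun p hp ↦ by
          rw [mem_filter, Nat.mem_primesLE, not_lt] at hp
          exact mem_Icc.2 ⟨hp.1.2.pos, Nat.le_floor hp.2⟩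
      _ = ⌊w⌋₊ := by simp
  have hsplit : (#{p ∈ Nat.primesLE ⌊v⌋₊ | w < (p : ℕ)} : ℝ) +
      #{p ∈ Nat.primesLE ⌊v⌋₊ | ¬ w < (p : ℕ)} = #(Nat.primesLE ⌊v⌋₊) := by
    exact_mod_cast card_filter_add_card_filter_not _
  have hdouble : v / (4 * R) = v / (8 * R) + v / (8 * R) := by
    rw [← add_halves (v / (4 * R))]
    ring
  linarith

lemma IsDense.mul_prime_of_le_pow {K f D p : ℕ} {w : ℝ} (hD : IsDense z (K * f) D) (hK : 4 ≤ K)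
    (hf : 1 ≤ f) (hKw : K ≤ w) (hfw : f ≤ w) (hzw : z ≤ w) (hDlo : w ^ 4 / 2 ≤ D)
    (hDhi : D ≤ w ^ 6) (hp : p.Prime) (hwp : w < p) (hpD : K * D * p ≤ w ^ 8) :
    IsDense z (K * f) (D * p) ∧ ∀ q : ℕ, q.Prime → q ∣ D * p → q ≤ w ^ 4 := by
  have hK' : (4 : ℝ) ≤ K := by exact_mod_cast hK
  have hf' : (1 : ℝ) ≤ f := by exact_mod_cast hf
  have hw : 0 < w := by linarith
  have hpw : (p : ℝ) ≤ w ^ 4 / 2 := by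
    refine le_of_mul_le_mul_left ?_ (by positivity : 0 < 2 * w ^ 4)
    calc 2 * w ^ 4 * (p : ℝ) = 4 * (w ^ 4 / 2) * p := by ring
      _ ≤ (K : ℝ) * D * p := by gcongr
      _ ≤ 2 * w ^ 4 * (w ^ 4 / 2) := hpD.trans_eq (by ring)
  refine ⟨hD.mul_prime hp (by exact_mod_cast hzw.trans_lt hwp) ?_, fun q hq hqD ↦ ?_⟩
  · have hpKD : (p : ℝ) ≤ K * f * D :=
      calc (p : ℝ) ≤ 1 * 1 * (w ^ 4 / 2) := by linarith
        _ ≤ (K : ℝ) * f * D := by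
          gcongr
          linarith
    exact_mod_cast hpKD
  rcases hq.dvd_mul.1 hqD with hqD | hqp
  · refine le_of_sq_le_sq ?_ (by positivity)
    calc (q : ℝ) ^ 2 ≤ K * f * D := by exact_mod_cast hD.prime_sq_le hq hqD
      _ ≤ w * w * w ^ 6 := by gcongr
      _ = (w ^ 4) ^ 2 := by ring
  · rw [(Nat.prime_dvd_prime_iff_eq hq hp).1 hqp]
    exact hpw.trans (half_le_self (by positivity))

lemma div_mul_inv_le_card_primesLE_filter_lt {K D : ℕ} {w : ℝ} (hK : 1 ≤ K) (hKw : K ≤ w)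
    (hw : 8 ≤ w) (hKlog : 32 * K * log w ≤ w) (hD : 1 ≤ D) (hDhi : D ≤ w ^ 6)
    (hDlo : w ^ 4 ≤ K * D) :
    w ^ 8 / (32 * K * log w) * (D : ℝ)⁻¹ ≤
      #{p ∈ Nat.primesLE ⌊w ^ 8 / (K * D)⌋₊ | w < (p : ℕ)} := by
  have : (0 : ℝ) < D := by exact_mod_cast hD
  have hlogw : 0 < log w := log_pos (by linarith)
  have hlo : w ^ 2 / K ≤ w ^ 8 / (K * D) := by
    rw [div_le_div_iff₀ (by positivity) (by positivity)]
    calc w ^ 2 * (K * D) ≤ w ^ 2 * (K * w ^ 6) := by gcongr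
      _ = w ^ 8 * K := by ring
  have hhi : w ^ 8 / (K * D) ≤ w ^ 4 := by
    rw [div_le_iff₀ (by positivity)]
    calc w ^ 8 = w ^ 4 * w ^ 4 := by ring
      _ ≤ w ^ 4 * (K * D) := by gcongr
  have hw2 : w ≤ w ^ 2 / K := by
    rw [le_div_iff₀ (by positivity), sq]
    gcongr
  refine (div_le_card_primesLE_filter_lt (R := 4 * log w) (by linarith) (by linarith) ?_ ?_).trans'
    (le_of_eq ?_)
  · calc log (w ^ 8 / (K * D)) ≤ log (w ^ 4) := log_le_log (by positivity) hhi
      _ = 4 * log w := by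
        rw [log_pow]
        push_cast
        rfl
  · rw [le_div_iff₀ (by positivity)]
    refine le_trans ?_ hlo
    rw [le_div_iff₀ (by positivity)]
    calc w * (8 * (4 * log w)) * K = w * (32 * K * log w) := by ring
      _ ≤ w ^ 2 := by
        rw [sq]
        gcongr
  · field_simp
    norm_num

lemma log_natCast_le_eight_mul_log {n p : ℕ} {w : ℝ} (hn : n ≠ 0) (hw : 0 < w)
    (hnw : n ≤ w ^ 8) (hwp : w < p) : log n ≤ 8 * log p := by
  calc log n ≤ log (w ^ 8) := log_le_log (by positivity) hnw
    _ = 8 * log w := by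
      rw [log_pow]
      push_cast
      rfl
    _ ≤ 8 * log p := by gcongr

lemma sum_card_primesLE_filter_lt_le_Axyzt {K f : ℕ} {w y v s : ℝ} {F : Finset ℕ} (hK : 4 ≤ K)
    (hf : 1 ≤ f) (hfw : f ≤ w) (hfs : f ≤ s) (hvz : v ≤ z) (hzw : z ≤ w) (hKw : K ≤ w)
    (hy : w ^ 4 ≤ y) (hF : ∀ D ∈ F, IsDense z (K * f) D ∧ w ^ 4 / 2 ≤ D ∧ D ≤ w ^ 6) :
    ∑ D ∈ F, (#{p ∈ Nat.primesLE ⌊w ^ 8 / (K * D)⌋₊ | w < (p : ℕ)} : ℝ) ≤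
      8 * Axyzt (w ^ 8) y v s := by
  have hw : 4 ≤ w := le_trans (by exact_mod_cast hK) hKw
  have hw4 : 0 < w ^ 4 := by positivity
  set P : ℕ → Finset ℕ := fun D ↦ {p ∈ Nat.primesLE ⌊w ^ 8 / (K * D)⌋₊ | w < (p : ℕ)}
  have hP {D p : ℕ} (hD : D ∈ F) (hpD : p ∈ P D) : p.Prime ∧ w < p ∧ K * D * p ≤ w ^ 8 := by
    have hD₀ : (0 : ℝ) < D := by linarith [(hF D hD).2.1]
    rw [mem_filter, Nat.mem_primesLE, Nat.le_floor_iff (by positivity),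
      le_div_iff₀' (by positivity)] at hpD
    exact ⟨hpD.1.2, hpD.2, hpD.1.1⟩
  set G := (F.sigma P).image fun q ↦ q.1 * q.2
  have hG : ∀ n ∈ G, IsDense z (K * f) n ∧ (n : ℝ) ≤ w ^ 8 ∧ (K * f : ℕ) * n ≤ w ^ 8 * s ∧
      ∀ p : ℕ, p.Prime → p ∣ n → p ≤ y := fun n hn ↦ by
    obtain ⟨⟨D, p⟩, hDp, rfl⟩ := mem_image.1 hn
    obtain ⟨hDF, hpP⟩ := mem_sigma.1 hDp
    obtain ⟨hD, hDlo, hDhi⟩ := hF D hDF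
    obtain ⟨hp, hwp, hpD⟩ := hP hDF hpP
    obtain ⟨hdense, hmax⟩ := hD.mul_prime_of_le_pow hK hf hKw hfw hzw hDlo hDhi hp hwp hpD
    have hcast : ((K * f : ℕ) : ℝ) * (D * p : ℕ) = K * D * p * f := by
      push_cast
      ring
    refine ⟨hdense, ?_, hcast.trans_le (by gcongr), fun q hq hqn ↦ (hmax q hq hqn).trans hy⟩
    refine le_trans ?_ hpD
    exact_mod_cast (Nat.le_mul_of_pos_left (D * p) (by omega)).trans_eq (mul_assoc K D p).symm
  calc ∑ D ∈ F, (#(P D) : ℝ) = ∑ D ∈ F, ∑ _ ∈ P D, (1 : ℝ) := by simp only [sum_const, nsmul_one]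
    _ ≤ (8 : ℕ) * ∑ _ ∈ G, (1 : ℝ) :=
        sum_sum_mul_prime_le (fun _ ↦ zero_le_one) (fun n hn ↦ (hG n hn).1.1) fun D hD p hp ↦ by
          have hmem : D * p ∈ G := mem_image.2 ⟨⟨D, p⟩, mem_sigma.2 ⟨hD, hp⟩, rfl⟩
          exact ⟨(hP hD hp).1, hmem, log_natCast_le_eight_mul_log (hG _ hmem).1.1 (by linarith)
            (hG _ hmem).2.1 (hP hD hp).2.1⟩
    _ ≤ 8 * Axyzt (w ^ 8) y v s := by
        rw [sum_const, nsmul_one, Nat.cast_ofNat]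
        gcongr
        refine card_isDense_le_Axyzt (Nat.mul_pos (by omega) hf) ?_ hvz hG
        exact (one_le_pow₀ (by linarith)).trans hy

lemma mul_sum_inv_le_Axyzt {K f : ℕ} {w y v s : ℝ} {F : Finset ℕ} (hK : 4 ≤ K) (hf : 1 ≤ f)
    (hfw : f ≤ w) (hfs : f ≤ s) (hvz : v ≤ z) (hzw : z ≤ w) (hw : 8 ≤ w) (hKw : K ≤ w)
    (hKlog : 32 * K * log w ≤ w) (hy : w ^ 4 ≤ y)
    (hF : ∀ D ∈ F, IsDense z (K * f) D ∧ w ^ 4 / 2 ≤ D ∧ D ≤ w ^ 6) :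
    w ^ 8 / (32 * K * log w) * ∑ D ∈ F, (D : ℝ)⁻¹ ≤ 8 * Axyzt (w ^ 8) y v s := by
  refine le_trans ?_ (sum_card_primesLE_filter_lt_le_Axyzt hK hf hfw hfs hvz hzw hKw hy hF)
  rw [mul_sum]
  refine sum_le_sum fun D hD ↦ ?_
  obtain ⟨hdense, hDlo, hDhi⟩ := hF D hD
  have hK' : (4 : ℝ) ≤ K := by exact_mod_cast hK
  refine div_mul_inv_le_card_primesLE_filter_lt (by omega) hKw hw hKlog
    (Nat.pos_of_ne_zero hdense.1) hDhi ?_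
  nlinarith

lemma exists_nat_mul_log_le_log_four_mul {x s κ : ℝ} (hs : 1 ≤ s) (hsx : s ≤ x) (hκ₀ : 0 ≤ κ)
    (hκ₁ : κ ≤ 1) :
    ∃ f : ℕ, 1 ≤ f ∧ f ≤ s ∧ log f ≤ κ * log x ∧ κ * log (2 * s) ≤ log (4 * f) := by
  have hone : 1 ≤ s ^ κ := one_le_rpow hs hκ₀
  have hf : 1 ≤ ⌊s ^ κ⌋₊ := (Nat.one_le_floor_iff _).2 hone
  have hf' : (1 : ℝ) ≤ ⌊s ^ κ⌋₊ := by exact_mod_cast hf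
  have hfs : (⌊s ^ κ⌋₊ : ℝ) ≤ s ^ κ := Nat.floor_le (by linarith)
  have hlog : log (s ^ κ) = κ * log s := log_rpow (by linarith) κ
  refine ⟨_, hf, hfs.trans ?_, ?_, ?_⟩
  · exact (rpow_le_rpow_of_exponent_le hs hκ₁).trans_eq (rpow_one s)
  · calc log ⌊s ^ κ⌋₊ ≤ log (s ^ κ) := log_le_log (by linarith) hfs
      _ ≤ κ * log x := by
        rw [hlog]
        gcongr
  · calc κ * log (2 * s) = κ * log 2 + log (s ^ κ) := by
          rw [log_mul (by norm_num) (by linarith), hlog, mul_add]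
      _ ≤ 1 * log 2 + log (s ^ κ) := by gcongr
      _ = log (2 * s ^ κ) := by rw [log_mul (by norm_num) (by linarith), one_mul]
      _ ≤ log (4 * ⌊s ^ κ⌋₊) :=
          log_le_log (by linarith) (by linarith [Nat.lt_floor_add_one (s ^ κ)])

lemma pow_four_half_le_of_two_thirds_log_lt {w M D : ℝ} (hw : 0 < w) (hM : w ^ 6 / 2 ≤ M)
    (hD : 0 < D) (h : 2 / 3 * log M < log D) : w ^ 4 / 2 ≤ D := by
  have hM₀ : 0 < M := lt_of_lt_of_le (by positivity) hM
  have hcube : log (M ^ 2) < log (D ^ 3) := by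
    rw [log_pow, log_pow]
    push_cast
    linarith
  rw [log_lt_log_iff (by positivity) (by positivity)] at hcube
  refine le_of_pow_le_pow_left₀ three_ne_zero hD.le ?_
  calc (w ^ 4 / 2) ^ 3 = (w ^ 6 / 2) ^ 2 / 2 := by ring
    _ ≤ (w ^ 6 / 2) ^ 2 := half_le_self (by positivity)
    _ ≤ M ^ 2 := by gcongr
    _ ≤ D ^ 3 := hcube.le

lemma eventually_mul_log_le (a : ℝ) : ∀ᶠ w : ℝ in atTop, a * log w ≤ w := by
  filter_upwards [(isLittleO_log_id_atTop.const_mul_left a).bound one_pos, eventually_ge_atTop 0]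
    with w hw hw₀
  rw [one_mul, id, norm_of_nonneg hw₀] at hw
  exact (le_abs_self _).trans hw

lemma half_le_natFloor {v : ℝ} (hv : 1 ≤ v) : v / 2 ≤ ⌊v⌋₊ := by
  have : (1 : ℝ) ≤ ⌊v⌋₊ := by exact_mod_cast (Nat.one_le_floor_iff v).2 hv
  linarith [Nat.lt_floor_add_one v]

lemma log_sub_log_two_le_log_natFloor {v : ℝ} (hv : 1 ≤ v) : log v - log 2 ≤ log ⌊v⌋₊ := by
  rw [← log_div (by positivity) two_ne_zero]
  exact log_le_log (by positivity) (half_le_natFloor hv)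

lemma mul_denseSum_le_Axyzt {K f : ℕ} {w y v s : ℝ} (hK : 4 ≤ K) (hf : 1 ≤ f) (hfw : f ≤ w)
    (hfs : f ≤ s) (hvz : v ≤ z) (hzw : z ≤ w) (hw : 8 ≤ w) (hKw : K ≤ w)
    (hKlog : 32 * K * log w ≤ w) (hy : w ^ 4 ≤ y) :
    w ^ 8 / (32 * K * log w) * denseSum z (K * f) ⌊w ^ 6⌋₊ (2 / 3 * log ⌊w ^ 6⌋₊) ≤
      8 * Axyzt (w ^ 8) y v s := by
  classical
  refine mul_sum_inv_le_Axyzt hK hf hfw hfs hvz hzw hw hKw hKlog hy fun D hD ↦ ?_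
  obtain ⟨hDmem, hdense, hDlog⟩ := mem_filter.1 hD
  obtain ⟨hD₁, hDM⟩ := mem_Icc.1 hDmem
  refine ⟨hdense, ?_, (Nat.le_floor_iff (by positivity)).1 hDM⟩
  exact pow_four_half_le_of_two_thirds_log_lt (by linarith)
    (half_le_natFloor (one_le_pow₀ (by linarith))) (by exact_mod_cast hD₁) hDlog

lemma exists_le_Axyzt_pow_eight (z₀ : ℝ) :
    ∃ c > 0, ∀ᶠ w : ℝ in atTop, ∀ y z s, w ^ 4 ≤ y → 1 ≤ s → s ≤ w ^ 8 → z ≤ z₀ →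
      c * w ^ 8 * log (2 * s) / log (w ^ 8) ≤ Axyzt (w ^ 8) y z s := by
  obtain ⟨t₀, K₀, c, -, hK₀, hc, hsum⟩ := exists_mul_log_le_denseSum_two_thirds ⌈z₀⌉₊
  set K := max t₀ 4
  have hK : 4 ≤ K := le_max_right _ _
  obtain ⟨κ, hκ, hκ₁, hκK⟩ : ∃ κ : ℝ, 0 < κ ∧ κ ≤ 1 / 8 ∧ K₀ * κ ≤ 1 / 4 := by
    refine ⟨min (1 / 8) (1 / (4 * K₀)), by positivity, min_le_left _ _, ?_⟩
    calc K₀ * min (1 / 8) (1 / (4 * K₀)) ≤ K₀ * (1 / (4 * K₀)) := by grw [min_le_right]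
      _ = 1 / 4 := by field_simp
  refine ⟨c * κ / (32 * K), by positivity, ?_⟩
  filter_upwards [eventually_ge_atTop 8, eventually_ge_atTop (K : ℝ),
    eventually_ge_atTop (⌈z₀⌉₊ : ℝ), eventually_mul_log_le (32 * K),
    tendsto_log_atTop.eventually_ge_atTop ((K₀ * (log K + 1) + log 2) / 4)]
    with w hw hKw hzw hKlog hlogw y z s hy hs hsw hz
  have hlogw₀ : 0 < log w := log_pos (by linarith)
  have hlogw8 : log (w ^ 8) = 8 * log w := by rw [log_pow, Nat.cast_ofNat]
  obtain ⟨f, hf, hfs, hlogf, hlogs⟩ := exists_nat_mul_log_le_log_four_mul hs hsw hκ.le (by linarith)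
  have hfw : f ≤ w := by
    rw [← log_le_log_iff (by exact_mod_cast hf) (by linarith)]
    nlinarith
  have hlogM := log_sub_log_two_le_log_natFloor (one_le_pow₀ (by linarith) : 1 ≤ w ^ 6)
  rw [log_pow, Nat.cast_ofNat] at hlogM
  have hlarge : K₀ * (log ((K * f : ℕ) : ℝ) + 1) ≤ log ⌊w ^ 6⌋₊ := by
    rw [log_natCast_mul (by omega) (by omega)]
    nlinarith
  have hdense : c * (κ * log (2 * s)) ≤
      denseSum ⌈z₀⌉₊ (K * f) ⌊w ^ 6⌋₊ (2 / 3 * log ⌊w ^ 6⌋₊) := by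
    grw [← hsum (K * f) ⌊w ^ 6⌋₊ ((le_max_left _ _).trans (Nat.le_mul_of_pos_right K hf)) hlarge,
      hlogs]
    gcongr
    exact_mod_cast Nat.mul_le_mul_right f hK
  have hmain := mul_denseSum_le_Axyzt hK hf hfw hfs (hz.trans (Nat.le_ceil z₀)) hzw hw hKw hKlog hy
  rw [hlogw8]
  calc (c * κ / (32 * K) * w ^ 8 * log (2 * s) / (8 * log w) : ℝ) =
        w ^ 8 / (32 * K * log w) * (c * (κ * log (2 * s))) / 8 := by field
    _ ≤ 8 * Axyzt (w ^ 8) y z s / 8 := by grw [hdense, hmain]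
    _ = Axyzt (w ^ 8) y z s := mul_div_cancel_left₀ _ (by norm_num)

lemma exists_le_Axyzt (z₀ : ℝ) : ∃ c > 0, ∀ x y z t : ℝ, 2 ≤ x → √x ≤ y → 1 ≤ t → t ≤ x →
    z ≤ z₀ → c * x * log (2 * t) / log x ≤ Axyzt x y z t := by
  obtain ⟨c, hc, hlarge⟩ := exists_le_Axyzt_pow_eight z₀
  obtain ⟨w₀, hw₀⟩ := eventually_atTop.1 hlarge
  set B := (max w₀ 1) ^ 8 * log (2 * (max w₀ 1) ^ 8) / log 2
  have hone : 1 ≤ (max w₀ 1) ^ 8 := one_le_pow₀ (le_max_right _ _)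
  have hlog : 0 < log (2 * (max w₀ 1) ^ 8) := log_pos (by linarith)
  have : 0 < log 2 := log_pos one_lt_two
  have hB : 0 < B := by positivity
  refine ⟨min c B⁻¹, by positivity, fun x y z t hx hxy ht htx hz ↦ ?_⟩
  have hlogx : 0 < log x := log_pos (by linarith)
  have hlogt : 0 ≤ log (2 * t) := log_nonneg (by linarith)
  obtain ⟨w, hw, rfl⟩ : ∃ w : ℝ, 0 ≤ w ∧ w ^ 8 = x :=
    ⟨x ^ (8⁻¹ : ℝ), by positivity, by
      exact_mod_cast rpow_inv_natCast_pow (by linarith : 0 ≤ x) (by norm_num : 8 ≠ 0)⟩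
  rcases le_total (max w₀ 1) w with hw' | hw'
  · have hsqrt : √(w ^ 8) = w ^ 4 := by
      rw [show w ^ 8 = (w ^ 4) ^ 2 by ring, sqrt_sq (by positivity)]
    refine le_trans ?_ (hw₀ w ((le_max_left _ _).trans hw') y z t (hsqrt ▸ hxy) ht htx hz)
    gcongr
    exact min_le_left _ _
  · have hpow : w ^ 8 ≤ (max w₀ 1) ^ 8 := by gcongr
    calc min c B⁻¹ * w ^ 8 * log (2 * t) / log (w ^ 8)
        ≤ B⁻¹ * (max w₀ 1) ^ 8 * log (2 * (max w₀ 1) ^ 8) / log 2 := by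
          gcongr
          · exact min_le_right _ _
          · exact htx.trans hpow
      _ = B⁻¹ * B := by ring
      _ = 1 := inv_mul_cancel₀ hB.ne'
      _ ≤ Axyzt (w ^ 8) y z t := by
        exact_mod_cast one_le_Axyzt (by linarith) ((one_le_sqrt.2 (by linarith)).trans hxy) ht

end SchinzelSzekeres

theorem stmt_7_general (z₀ : ℝ) : ∃ c C : ℝ, 0 < c ∧ c ≤ C ∧ ∀ x y z t : ℝ,
    2 ≤ x → √x ≤ y → 1 ≤ t → t ≤ x → z ≤ z₀ →
      c * x * Real.log (2 * t) / Real.log x ≤ (Axyzt x y z t : ℝ) ∧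
      (Axyzt x y z t : ℝ) ≤ C * x * Real.log (2 * t) / Real.log x := by
  obtain ⟨C, -, hupper⟩ := SchinzelSzekeres.exists_Axyzt_le
  obtain ⟨c, hc, hlower⟩ := SchinzelSzekeres.exists_le_Axyzt z₀
  refine ⟨c, max c C, hc, le_max_left c C, fun x y z t hx hxy ht htx hz ↦
    ⟨hlower x y z t hx hxy ht htx hz, (hupper x y z t hx ht).trans ?_⟩⟩
  have hlogx : 0 ≤ Real.log x := Real.log_nonneg (by linarith)
  have hlogt : 0 ≤ Real.log (2 * t) := Real.log_nonneg (by linarith)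
  gcongr
  exact le_max_right c C

/-- Let `z₀ ≥ 1` and `0 < ε < 1/2`. There are constants `0 < c ≤ C` (depending only on
`z₀` and `ε`) such that whenever `x ≥ y ≥ x^{1/2+ε} ≥ 2`, `1 ≤ t ≤ x` and `1 ≤ z ≤ z₀`,
one has `c · x · log(2t)/log x ≤ A(x,y,z,t) ≤ C · x · log(2t)/log x`. -/
theorem stmt_7 (z₀ : ℝ) (hz₀ : 1 ≤ z₀) (ε : ℝ) (hε : 0 < ε) (hε' : ε < 1 / 2) :
    ∃ c C : ℝ, 0 < c ∧ c ≤ C ∧ ∀ x y z t : ℝ,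
      y ≤ x → x ^ ((1 : ℝ) / 2 + ε) ≤ y → (2 : ℝ) ≤ x ^ ((1 : ℝ) / 2 + ε) →
      1 ≤ t → t ≤ x → 1 ≤ z → z ≤ z₀ →
      c * x * Real.log (2 * t) / Real.log x ≤ (Axyzt x y z t : ℝ) ∧
      (Axyzt x y z t : ℝ) ≤ C * x * Real.log (2 * t) / Real.log x := by
  obtain ⟨c, C, hc, hcC, hbounds⟩ := stmt_7_general z₀
  refine ⟨c, C, hc, hcC, fun x y z t hyx hxy hx ht htx _ hz ↦
    hbounds x y z t (by linarith) (le_trans ?_ hxy) ht htx hz⟩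
  rw [Real.sqrt_eq_rpow]
  exact Real.rpow_le_rpow_of_exponent_le (by linarith) (by linarith)
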